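/- arXiv:1302.3866 — 2 statements merged into one kernel-verified Lean document; each statement's English description precedes it below -/
import Mathlib

section
/- Let A satisfy (H1), β_i > -2 for all i ∈ I, and let u be a finite-energy radial solution of the singular Liouville system. If φ = (φ_1,...,φ_n) solves the linearized system (r φ_i'(r))' + Σ_{j=1}^n a_{ij} r^{β_j+1} e^{u_j(r)} φ_j(r) = 0 for 0 < r < ∞, is continuous at 0, and satisfies φ_i(0) = 0 for all i ∈ I, then φ_i ≡ 0 for all i ∈ I. -/
open Set MeasureTheory

/-- Hypothesis (H1): symmetric, nonnegative entries, irreducible, invertible. -/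
def H1 {n : ℕ} (A : Matrix (Fin n) (Fin n) ℝ) : Prop :=
  A.IsSymm ∧ (∀ i j, 0 ≤ A i j) ∧
  (∀ S : Finset (Fin n), S.Nonempty → S ≠ Finset.univ → ∃ i ∈ S, ∃ j ∈ Sᶜ, A i j ≠ 0) ∧
  IsUnit A.det

/-- Radial solution of the singular Liouville system, with the finite-energy condition. -/
def RadialSolution {n : ℕ} (A : Matrix (Fin n) (Fin n) ℝ) (β : Fin n → ℝ)
    (u : Fin n → ℝ → ℝ) : Prop :=
  (∀ i, ∀ r > (0:ℝ), ContDiffAt ℝ 2 (u i) r) ∧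
  (∀ i, ∀ r > (0:ℝ),
    deriv (deriv (u i)) r + (1 / r) * deriv (u i) r
      + ∑ j, A i j * r ^ β j * Real.exp (u j r) = 0) ∧
  (∀ i, IntegrableOn (fun r : ℝ => r ^ (β i + 1) * Real.exp (u i r)) (Set.Ioi 0))

/-- Solution of the linearized system (rφ_i')' + Σ_j a_{ij} r^{β_j+1} e^{u_j} φ_j = 0. -/
def LinearizedSolution {n : ℕ} (A : Matrix (Fin n) (Fin n) ℝ) (β : Fin n → ℝ)
    (u φ : Fin n → ℝ → ℝ) : Prop :=
  (∀ i, ∀ r > (0:ℝ), ContDiffAt ℝ 2 (φ i) r) ∧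
  (∀ i, ∀ r > (0:ℝ),
    deriv (fun s => s * deriv (φ i) s) r
      + ∑ j, A i j * r ^ (β j + 1) * Real.exp (u j r) * φ j r = 0)

open Filter Topology Asymptotics

/-!
In the variable `t = log r`, with `f t = φ (exp t)` and `v i t = u i (exp t) + (β i + 2) * t`, the
linearized system reads `f'' = -A *ᵥ (exp v * f)`, and `f → 0` at `-∞`. Each `v i` is concave
because `u i` is superharmonic, and `exp (v i)` is integrable at `-∞` by finiteness of the energy,
so `v i` lies below a line of positive slope and the potential `exp v` decays exponentially. Hence
integrating the equation twice from `-∞` is a contraction on a half-line `(-∞, T]`, where `f`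
therefore vanishes; Grönwall's inequality carries `f = 0` to all later times.
-/

section Comparison

variable {E : Type*} [NormedAddCommGroup E] [NormedSpace ℝ E] {f f' f'' : ℝ → E}

lemma le_of_convexOn_Iic_of_tendsto_atBot {g : ℝ → ℝ} {t l : ℝ} (hg : ConvexOn ℝ (Iic t) g)
    (hl : Tendsto g atBot (𝓝 l)) : l ≤ g t := by
  have midpoint_le : ∀ᶠ s in atBot, 2 * g s - g (2 * s - t) ≤ g t := by
    filter_upwards [eventually_le_atBot t] with s hs
    have h := hg.2 self_mem_Iic (show 2 * s - t ∈ Iic t by rw [mem_Iic]; linarith)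
      one_half_pos.le one_half_pos.le (add_halves 1)
    rw [smul_eq_mul, smul_eq_mul, show 1 / 2 * t + 1 / 2 * (2 * s - t) = s by ring,
      smul_eq_mul, smul_eq_mul] at h
    linarith
  have reflected : Tendsto (fun s : ℝ => 2 * s - t) atBot atBot :=
    tendsto_atBot_add_const_right _ (-t) (tendsto_id.const_mul_atBot two_pos)
  have := le_of_tendsto ((hl.const_mul 2).sub (hl.comp reflected)) midpoint_le
  linarith

lemma norm_le_of_norm_deriv2_le {W W' W'' : ℝ → ℝ} {t : ℝ}
    (hf : ∀ s ≤ t, HasDerivAt f (f' s) s) (hf' : ∀ s ≤ t, HasDerivAt f' (f'' s) s)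
    (hW : ∀ s ≤ t, HasDerivAt W (W' s) s) (hW' : ∀ s ≤ t, HasDerivAt W' (W'' s) s)
    (hle : ∀ s ≤ t, ‖f'' s‖ ≤ W'' s)
    (hf0 : Tendsto f atBot (𝓝 0)) (hW0 : Tendsto W atBot (𝓝 0)) : ‖f t‖ ≤ W t := by
  obtain ⟨L, hL, hLt⟩ := exists_dual_vector'' ℝ (f t)
  have hg : ∀ s ≤ t, HasDerivAt (fun s => W s - L (f s)) (W' s - L (f' s)) s :=
    fun s hs => (hW s hs).sub (L.hasFDerivAt.comp_hasDerivAt s (hf s hs))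
  have hg' : ∀ s ≤ t, HasDerivAt (fun s => W' s - L (f' s)) (W'' s - L (f'' s)) s :=
    fun s hs => (hW' s hs).sub (L.hasFDerivAt.comp_hasDerivAt s (hf' s hs))
  have hconv : ConvexOn ℝ (Iic t) fun s => W s - L (f s) := by
    have interior_le : ∀ s ∈ interior (Iic t), s ≤ t := fun s hs => interior_subset (s := Iic t) hs
    refine convexOn_of_hasDerivWithinAt2_nonneg (convex_Iic t)
      (fun s hs => (hg s hs).continuousAt.continuousWithinAt)
      (fun s hs => (hg s (interior_le s hs)).hasDerivWithinAt)
      (fun s hs => (hg' s (interior_le s hs)).hasDerivWithinAt)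
      (fun s hs => sub_nonneg.2 ?_)
    calc L (f'' s) ≤ ‖L (f'' s)‖ := Real.le_norm_self _
      _ ≤ 1 * ‖f'' s‖ := L.le_of_opNorm_le hL _
      _ ≤ W'' s := by rw [one_mul]; exact hle s (interior_le s hs)
  have hlim : Tendsto (fun s => W s - L (f s)) atBot (𝓝 0) := by
    simpa using hW0.sub ((L.continuous.tendsto 0).comp hf0)
  have := le_of_convexOn_Iic_of_tendsto_atBot hconv hlim
  rw [hLt] at this
  exact sub_nonneg.1 this

lemma tendsto_const_mul_exp_mul_atBot (c : ℝ) {δ : ℝ} (hδ : 0 < δ) :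
    Tendsto (fun t => c * Real.exp (δ * t)) atBot (𝓝 0) := by
  simpa using (Real.tendsto_exp_atBot.comp (tendsto_id.const_mul_atBot hδ)).const_mul c

lemma hasDerivAt_const_mul_exp_mul (c δ t : ℝ) :
    HasDerivAt (fun s => c * Real.exp (δ * s)) (c * δ * Real.exp (δ * t)) t := by
  have := ((hasDerivAt_const_mul (x := t) δ).exp).const_mul c
  exact this.congr_deriv (by ring)

lemma norm_le_exp_of_norm_deriv2_le_exp {M δ t : ℝ} (hδ : 0 < δ)
    (hf : ∀ s ≤ t, HasDerivAt f (f' s) s) (hf' : ∀ s ≤ t, HasDerivAt f' (f'' s) s)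
    (hle : ∀ s ≤ t, ‖f'' s‖ ≤ M * Real.exp (δ * s)) (hf0 : Tendsto f atBot (𝓝 0)) :
    ‖f t‖ ≤ M / δ ^ 2 * Real.exp (δ * t) := by
  refine norm_le_of_norm_deriv2_le hf hf' (fun s _ => hasDerivAt_const_mul_exp_mul _ δ s)
    (fun s _ => hasDerivAt_const_mul_exp_mul _ δ s) (fun s hs => ?_) hf0
    (tendsto_const_mul_exp_mul_atBot _ hδ)
  rw [show M / δ ^ 2 * δ * δ = M by field_simp]
  exact hle s hs

lemma eventuallyEq_zero_of_deriv2_isBigO_exp_smul {δ : ℝ} (hδ : 0 < δ)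
    (hf : ∀ᶠ t in atBot, HasDerivAt f (f' t) t) (hf' : ∀ᶠ t in atBot, HasDerivAt f' (f'' t) t)
    (hO : f'' =O[atBot] fun t => Real.exp (δ * t) • f t) (hf0 : Tendsto f atBot (𝓝 0)) :
    f =ᶠ[atBot] 0 := by
  obtain ⟨C, hC, hbound⟩ := hO.exists_nonneg
  have hsmall := (tendsto_const_mul_exp_mul_atBot (C / δ ^ 2) hδ).eventually_le_const one_half_pos
  have hle_one := (tendsto_zero_iff_norm_tendsto_zero.1 hf0).eventually_le_const one_pos
  obtain ⟨T, hT⟩ := eventually_atBot.1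
    (hf.and (hf'.and (hbound.bound.and (hsmall.and hle_one))))
  choose! hf hf' hbound hsmall hle_one using hT
  set S := ⨆ t : Iic T, ‖f t‖
  have hbdd : BddAbove (range fun t : Iic T => ‖f t‖) :=
    ⟨1, forall_mem_range.2 fun t => hle_one t t.2⟩
  have hle_sup : ∀ t ≤ T, ‖f t‖ ≤ S := fun t ht => le_ciSup hbdd (⟨t, ht⟩ : Iic T)
  have hS : 0 ≤ S := (norm_nonneg _).trans (hle_sup T le_rfl)
  have deriv2_le : ∀ t ≤ T, ‖f'' t‖ ≤ S * C * Real.exp (δ * t) := fun t ht =>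
    calc ‖f'' t‖ ≤ C * (Real.exp (δ * t) * ‖f t‖) := by
          simpa [norm_smul] using hbound t ht
      _ ≤ C * (Real.exp (δ * t) * S) := by gcongr; exact hle_sup t ht
      _ = S * C * Real.exp (δ * t) := by ring
  have halving : ∀ t ≤ T, ‖f t‖ ≤ S * (1 / 2) := fun t ht =>
    calc ‖f t‖ ≤ S * C / δ ^ 2 * Real.exp (δ * t) :=
          norm_le_exp_of_norm_deriv2_le_exp hδ (fun s hs => hf s (hs.trans ht))
            (fun s hs => hf' s (hs.trans ht)) (fun s hs => deriv2_le s (hs.trans ht)) hf0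
      _ = S * (C / δ ^ 2 * Real.exp (δ * t)) := by ring
      _ ≤ S * (1 / 2) := by gcongr; exact hsmall t ht
  have hS_le : S ≤ S * (1 / 2) := ciSup_le fun t => halving t t.2
  filter_upwards [eventually_le_atBot T] with t ht
  exact norm_le_zero_iff.1 ((hle_sup t ht).trans (by linarith))

lemma eq_zero_of_norm_deriv2_le_mul_norm {a b K : ℝ}
    (hf : ∀ t ∈ Icc a b, HasDerivAt f (f' t) t) (hf' : ∀ t ∈ Icc a b, HasDerivAt f' (f'' t) t)
    (hle : ∀ t ∈ Ico a b, ‖f'' t‖ ≤ K * ‖f t‖) (ha : f a = 0) (ha' : f' a = 0) :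
    ∀ t ∈ Icc a b, f t = 0 := by
  have hpair : ∀ t ∈ Icc a b, HasDerivAt (fun s => (f s, f' s)) (f' t, f'' t) t :=
    fun t ht => (hf t ht).prodMk (hf' t ht)
  have hpair_le : ∀ t ∈ Ico a b, ‖(f' t, f'' t)‖ ≤ max 1 K * ‖(f t, f' t)‖ := by
    intro t ht
    refine max_le ?_ ?_
    · calc ‖f' t‖ = 1 * ‖f' t‖ := (one_mul _).symm
        _ ≤ max 1 K * ‖(f t, f' t)‖ := by gcongr; exacts [le_max_left _ _, le_max_right _ _]
    · calc ‖f'' t‖ ≤ K * ‖f t‖ := hle t ht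
        _ ≤ max 1 K * ‖(f t, f' t)‖ := by gcongr; exacts [le_max_right _ _, le_max_left _ _]
  intro t ht
  exact congrArg Prod.fst <| eq_zero_of_abs_deriv_le_mul_abs_self_of_eq_zero_right
    (fun s hs => (hpair s hs).continuousAt.continuousWithinAt)
    (fun s hs => (hpair s (Ico_subset_Icc_self hs)).hasDerivWithinAt)
    (Prod.ext ha ha') hpair_le t ht

lemma eq_zero_of_norm_deriv2_le_of_isBigO_exp {q : ℝ → ℝ} {δ : ℝ} (hδ : 0 < δ)
    (hf : ∀ t, HasDerivAt f (f' t) t) (hf' : ∀ t, HasDerivAt f' (f'' t) t)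
    (hle : ∀ t, ‖f'' t‖ ≤ q t * ‖f t‖) (hq : Continuous q)
    (hqO : q =O[atBot] fun t => Real.exp (δ * t)) (hf0 : Tendsto f atBot (𝓝 0)) (t : ℝ) :
    f t = 0 := by
  have hO : f'' =O[atBot] fun t => Real.exp (δ * t) • f t := by
    refine IsBigO.trans (.of_bound' (.of_forall fun s => ?_)) (hqO.smul (isBigO_refl f atBot))
    rw [norm_smul]
    exact (hle s).trans (mul_le_mul_of_nonneg_right (Real.le_norm_self _) (norm_nonneg _))
  obtain ⟨T, hT⟩ := eventually_atBot.1
    (eventuallyEq_zero_of_deriv2_isBigO_exp_smul hδ (.of_forall hf) (.of_forall hf') hO hf0)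
  set a := min (T - 1) t
  have haT : a < T := (min_le_left _ _).trans_lt (sub_one_lt T)
  have ha' : f' a = 0 := (hf a).unique <| (hasDerivAt_const a 0).congr_of_eventuallyEq <|
    (eventually_lt_nhds haT).mono fun s hs => hT s hs.le
  obtain ⟨K, hK⟩ := isCompact_Icc.exists_bound_of_continuousOn (hq.continuousOn (s := Icc a t))
  exact eq_zero_of_norm_deriv2_le_mul_norm (fun s _ => hf s) (fun s _ => hf' s)
    (fun s hs => (hle s).trans <| mul_le_mul_of_nonneg_right
      ((Real.le_norm_self _).trans (hK s (Ico_subset_Icc_self hs))) (norm_nonneg _))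
    (hT a haT.le) ha' t ⟨min_le_right _ _, le_rfl⟩

end Comparison

section ExponentialDecay

lemma not_antitoneOn_Iic_of_integrableOn {g : ℝ → ℝ} {c : ℝ} (hg : IntegrableOn g (Iic c))
    (hc : 0 < g c) : ¬AntitoneOn g (Iic c) := by
  intro hanti
  have hconst : IntegrableOn (fun _ => g c) (Iic c) := by
    refine hg.mono' aestronglyMeasurable_const (ae_restrict_of_forall_mem measurableSet_Iic ?_)
    intro t ht
    rw [Real.norm_of_nonneg hc.le]
    exact hanti ht self_mem_Iic ht
  simp [integrableOn_const_iff, hc.ne'] at hconst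

lemma exists_isBigO_exp_of_concaveOn {v : ℝ → ℝ} {c : ℝ} (hv : ConcaveOn ℝ (Iic c) v)
    (hint : IntegrableOn (fun t => Real.exp (v t)) (Iic c)) :
    ∃ δ > 0, (fun t => Real.exp (v t)) =O[atBot] fun t => Real.exp (δ * t) := by
  obtain ⟨a, ha, b, hb, hab, hvab⟩ : ∃ a ∈ Iic c, ∃ b ∈ Iic c, a < b ∧ v a < v b := by
    by_contra! h
    refine not_antitoneOn_Iic_of_integrableOn hint (Real.exp_pos _) fun a ha b hb hab => ?_
    rcases hab.eq_or_lt with rfl | hab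
    · exact le_rfl
    · exact Real.exp_le_exp.2 (h a ha b hb hab)
  set δ := (v b - v a) / (b - a)
  refine ⟨δ, div_pos (sub_pos.2 hvab) (sub_pos.2 hab), Real.isBigO_exp_comp_exp_comp.2 ?_⟩
  refine isBoundedUnder_of_eventually_le (a := v a - δ * a) ?_
  filter_upwards [eventually_lt_atBot a] with t ht
  have hslope := hv.slope_anti_adjacent (mem_Iic.2 (ht.le.trans ha)) hb ht hab
  rw [le_div_iff₀ (sub_pos.2 ht)] at hslope
  rw [Pi.sub_apply]
  linarith

lemma exists_pi_isBigO_exp {ι : Type*} [Fintype ι] {g : ι → ℝ → ℝ}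
    (h : ∀ i, ∃ δ > 0, g i =O[atBot] fun t => Real.exp (δ * t)) :
    ∃ δ > 0, (fun t i => g i t) =O[atBot] fun t => Real.exp (δ * t) := by
  choose δ hδ hg using h
  have hsmaller : ∀ᶠ ε in 𝓝[>] (0 : ℝ), ∀ i, g i =O[atBot] fun t => Real.exp (ε * t) := by
    refine eventually_all.2 fun i => ?_
    filter_upwards [Ioo_mem_nhdsGT (hδ i)] with ε hε
    refine (hg i).trans (.of_norm_eventuallyLE ?_)
    filter_upwards [eventually_le_atBot 0] with t ht
    rw [Real.norm_of_nonneg (Real.exp_pos _).le]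
    exact Real.exp_le_exp.2 (mul_le_mul_of_nonpos_right hε.2.le ht)
  obtain ⟨ε, hε, hε0⟩ := (hsmaller.and self_mem_nhdsWithin).exists
  exact ⟨ε, hε0, isBigO_pi.2 hε⟩

end ExponentialDecay

section LogarithmicVariable

variable {g : ℝ → ℝ}

lemma hasDerivAt_comp_exp {t : ℝ} (hg : DifferentiableAt ℝ g (Real.exp t)) :
    HasDerivAt (fun s => g (Real.exp s)) (Real.exp t * deriv g (Real.exp t)) t := by
  rw [mul_comm]
  exact hg.hasDerivAt.comp t (Real.hasDerivAt_exp t)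

lemma hasDerivAt_mul_deriv {r : ℝ} (hg : ContDiffAt ℝ 2 g r) :
    HasDerivAt (fun s => s * deriv g s) (deriv g r + r * deriv (deriv g) r) r := by
  have hg' : DifferentiableAt ℝ (deriv g) r :=
    (hg.derivWithin (m := 1) one_add_one_eq_two.le).differentiableAt one_ne_zero
  simpa using (hasDerivAt_id r).fun_mul hg'.hasDerivAt

lemma hasDerivAt_exp_mul_deriv_exp {t : ℝ} (hg : ContDiffAt ℝ 2 g (Real.exp t)) :
    HasDerivAt (fun s => Real.exp s * deriv g (Real.exp s))
      (Real.exp t * deriv (fun s => s * deriv g s) (Real.exp t)) t :=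
  hasDerivAt_comp_exp (hasDerivAt_mul_deriv hg).differentiableAt

/-- The Emden–Fowler transform of a radial function `u`: in the variable `t = log r` it absorbs the
weight `r ^ β` and the Jacobian, so that `r ^ β * exp (u r) * r ^ 2 = exp (emdenFowler β u t)`. -/
noncomputable def emdenFowler (β : ℝ) (u : ℝ → ℝ) (t : ℝ) : ℝ :=
  u (Real.exp t) + (β + 2) * t

variable {β : ℝ} {u : ℝ → ℝ}

lemma exp_emdenFowler (t : ℝ) : Real.exp (emdenFowler β u t) =
    Real.exp t * (Real.exp t ^ (β + 1) * Real.exp (u (Real.exp t))) := by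
  rw [emdenFowler, ← Real.exp_mul, ← Real.exp_add, ← Real.exp_add]
  ring_nf

lemma hasDerivAt_emdenFowler {t : ℝ} (hu : DifferentiableAt ℝ u (Real.exp t)) :
    HasDerivAt (emdenFowler β u) (Real.exp t * deriv u (Real.exp t) + (β + 2)) t :=
  (hasDerivAt_comp_exp hu).add (hasDerivAt_const_mul (β + 2))

lemma concaveOn_emdenFowler (hu : ∀ r > 0, ContDiffAt ℝ 2 u r)
    (hΔ : ∀ r > 0, deriv (deriv u) r + 1 / r * deriv u r ≤ 0) :
    ConcaveOn ℝ univ (emdenFowler β u) := by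
  have hv : ∀ t, HasDerivAt (emdenFowler β u) (Real.exp t * deriv u (Real.exp t) + (β + 2)) t :=
    fun t => hasDerivAt_emdenFowler ((hu _ (Real.exp_pos t)).differentiableAt two_ne_zero)
  refine concaveOn_of_hasDerivWithinAt2_nonpos convex_univ
    (fun t _ => (hv t).continuousAt.continuousWithinAt) (fun t _ => (hv t).hasDerivWithinAt)
    (fun t _ => ((hasDerivAt_exp_mul_deriv_exp (hu _ (Real.exp_pos t))).add_const
      (β + 2)).hasDerivWithinAt) fun t _ => ?_
  set r := Real.exp t
  have hr : 0 < r := Real.exp_pos t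
  calc r * deriv (fun s => s * deriv u s) r
      = r ^ 2 * (deriv (deriv u) r + 1 / r * deriv u r) := by
        rw [(hasDerivAt_mul_deriv (hu r hr)).deriv]
        field_simp
        ring
    _ ≤ 0 := mul_nonpos_of_nonneg_of_nonpos (sq_nonneg r) (hΔ r hr)

lemma integrableOn_exp_emdenFowler_iff (c : ℝ) :
    IntegrableOn (fun t => Real.exp (emdenFowler β u t)) (Iic c) ↔
      IntegrableOn (fun r => r ^ (β + 1) * Real.exp (u r)) (Ioc 0 (Real.exp c)) := by
  rw [← Real.image_exp_Iic, integrableOn_image_iff_integrableOn_deriv_smul_of_monotoneOn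
    measurableSet_Iic (fun t _ => (Real.hasDerivAt_exp t).hasDerivWithinAt)
    (Real.exp_monotone.monotoneOn _)]
  simp only [exp_emdenFowler, smul_eq_mul]

lemma exists_isBigO_exp_emdenFowler (hu : ∀ r > 0, ContDiffAt ℝ 2 u r)
    (hΔ : ∀ r > 0, deriv (deriv u) r + 1 / r * deriv u r ≤ 0)
    (hE : IntegrableOn (fun r => r ^ (β + 1) * Real.exp (u r)) (Ioc 0 1)) :
    ∃ δ > 0, (fun t => Real.exp (emdenFowler β u t)) =O[atBot] fun t => Real.exp (δ * t) := by
  refine exists_isBigO_exp_of_concaveOn (c := 0)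
    ((concaveOn_emdenFowler hu hΔ).subset (subset_univ _) (convex_Iic 0)) ?_
  rwa [integrableOn_exp_emdenFowler_iff, Real.exp_zero]

end LogarithmicVariable

section LinearizedSystem

open scoped Matrix Matrix.Norms.Operator

variable {ι : Type*} [Fintype ι] {A : Matrix ι ι ℝ} {β : ι → ℝ} {u φ : ι → ℝ → ℝ}

lemma hasDerivAt_exp_mul_deriv_exp_of_linearized
    (hφ : ∀ i, ∀ r > 0, ContDiffAt ℝ 2 (φ i) r)
    (hlin : ∀ i, ∀ r > 0, deriv (fun s => s * deriv (φ i) s) r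
      + ∑ j, A i j * r ^ (β j + 1) * Real.exp (u j r) * φ j r = 0) (t : ℝ) :
    HasDerivAt (fun s i => Real.exp s * deriv (φ i) (Real.exp s))
      (-(A *ᵥ ((fun j => Real.exp (emdenFowler (β j) (u j) t)) * fun j => φ j (Real.exp t))))
      t := by
  refine hasDerivAt_pi.2 fun i => ?_
  refine (hasDerivAt_exp_mul_deriv_exp (hφ i _ (Real.exp_pos t))).congr_deriv ?_
  rw [eq_neg_of_add_eq_zero_left (hlin i _ (Real.exp_pos t)), mul_neg, Finset.mul_sum,
    Pi.neg_apply, Matrix.mulVec_eq_sum, Finset.sum_apply]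
  refine congrArg Neg.neg (Finset.sum_congr rfl fun j _ => ?_)
  simp only [Pi.mul_apply, Pi.smul_apply, Matrix.transpose_apply, exp_emdenFowler,
    MulOpposite.smul_eq_mul_unop, MulOpposite.unop_op]
  ring

theorem linearized_solution_vanishing_initial_data_is_zero_general
    (hu : ∀ i, ∀ r > 0, ContDiffAt ℝ 2 (u i) r)
    (hΔ : ∀ i, ∀ r > 0, deriv (deriv (u i)) r + 1 / r * deriv (u i) r ≤ 0)
    (hE : ∀ i, IntegrableOn (fun r => r ^ (β i + 1) * Real.exp (u i r)) (Ioc 0 1))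
    (hφ : ∀ i, ∀ r > 0, ContDiffAt ℝ 2 (φ i) r)
    (hlin : ∀ i, ∀ r > 0, deriv (fun s => s * deriv (φ i) s) r
      + ∑ j, A i j * r ^ (β j + 1) * Real.exp (u j r) * φ j r = 0)
    (hφ0cont : ∀ i, ContinuousWithinAt (φ i) (Ici 0) 0) (hφ0 : ∀ i, φ i 0 = 0) :
    ∀ i, ∀ r ≥ 0, φ i r = 0 := by
  let potential : ℝ → ι → ℝ := fun t j => Real.exp (emdenFowler (β j) (u j) t)
  obtain ⟨δ, hδ, hdecay⟩ : ∃ δ > 0, potential =O[atBot] fun t => Real.exp (δ * t) :=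
    exists_pi_isBigO_exp fun i => exists_isBigO_exp_emdenFowler (hu i) (hΔ i) (hE i)
  have hcont : Continuous potential := continuous_pi fun i => Real.continuous_exp.comp <|
    continuousOn_univ.1 <| (concaveOn_emdenFowler (hu i) (hΔ i)).continuousOn isOpen_univ
  have hlim : Tendsto (fun t i => φ i (Real.exp t)) atBot (𝓝 0) := tendsto_pi_nhds.2 fun i => by
    have := (hφ0cont i).tendsto.mono_left (nhdsWithin_mono 0 Ioi_subset_Ici_self)
    rw [hφ0 i] at this
    exact this.comp Real.tendsto_exp_atBot_nhdsGT
  have hzero : ∀ t, (fun i => φ i (Real.exp t)) = 0 :=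
    eq_zero_of_norm_deriv2_le_of_isBigO_exp hδ (q := fun t => ‖A‖ * ‖potential t‖)
      (fun t => hasDerivAt_pi.2 fun i => hasDerivAt_comp_exp
        ((hφ i _ (Real.exp_pos t)).differentiableAt two_ne_zero))
      (hasDerivAt_exp_mul_deriv_exp_of_linearized hφ hlin)
      (fun t => by
        rw [norm_neg, mul_assoc]
        exact (Matrix.linfty_opNorm_mulVec A _).trans (by gcongr; exact norm_mul_le _ _))
      (continuous_const.mul hcont.norm) (hdecay.norm_left.const_mul_left ‖A‖) hlim
  intro i r hr
  rcases hr.eq_or_lt with rfl | hr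
  · exact hφ0 i
  · rw [← Real.exp_log hr]
    exact congrFun (hzero (Real.log r)) i

end LinearizedSystem

lemma RadialSolution.laplacian_nonpos {n : ℕ} {A : Matrix (Fin n) (Fin n) ℝ} {β : Fin n → ℝ}
    {u : Fin n → ℝ → ℝ} (hu : RadialSolution A β u) (hA : ∀ i j, 0 ≤ A i j) (i : Fin n)
    (r : ℝ) (hr : 0 < r) : deriv (deriv (u i)) r + 1 / r * deriv (u i) r ≤ 0 := by
  have hsource : 0 ≤ ∑ j, A i j * r ^ β j * Real.exp (u j r) :=
    Finset.sum_nonneg fun j _ =>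
      mul_nonneg (mul_nonneg (hA i j) (Real.rpow_nonneg hr.le _)) (Real.exp_pos _).le
  linarith [hu.2.1 i r hr]

theorem linearized_solution_vanishing_initial_data_is_zero {n : ℕ} (hn : 0 < n)
    (A : Matrix (Fin n) (Fin n) ℝ) (β : Fin n → ℝ)
    (hA : H1 A) (hβ : ∀ i, -2 < β i)
    (u : Fin n → ℝ → ℝ) (hu : RadialSolution A β u)
    (φ : Fin n → ℝ → ℝ) (hφ : LinearizedSolution A β u φ)
    (hφ0cont : ∀ i, ContinuousWithinAt (φ i) (Set.Ici 0) 0)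
    (hφ0 : ∀ i, φ i 0 = 0) :
    ∀ i, ∀ r ≥ (0:ℝ), φ i r = 0 :=
  linearized_solution_vanishing_initial_data_is_zero_general hu.1 (hu.laplacian_nonpos hA.2.1)
    (fun i => (hu.2.2 i).mono_set Ioc_subset_Ioi_self) hφ.1 hφ.2 hφ0cont hφ0
end

section
/- Let A satisfy (H1) and β_i > -2 for all i ∈ I. Suppose that for each c = (c_1,...,c_{n-1}) in a neighborhood of a point of Π₁ there is a finite-energy radial solution u(·;c) of the singular Liouville system with u_i(0) = c_i for i = 1,...,n-1 and u_n(0) = 0, depending differentiably on c, with energy σ(c) = (σ_1(c),...,σ_n(c)). Then the (n-1)×(n-1) Jacobian matrix M = (∂σ_i/∂c_j)_{1 ≤ i,j ≤ n-1} is nonsingular at every point of Π₁. -/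
open Set MeasureTheory

/-- Energy of a radial solution: σ_i = (1/2π)∫_{ℝ²}|x|^{β_i}e^{u_i} = ∫_0^∞ r^{β_i+1}e^{u_i(r)}dr. -/
noncomputable def energy {n : ℕ} (β : Fin n → ℝ) (u : Fin n → ℝ → ℝ) (i : Fin n) : ℝ :=
  ∫ r in Set.Ioi (0:ℝ), r ^ (β i + 1) * Real.exp (u i r)

/-- Λ_J(σ) = 2 Σ_{i∈J}(β_i+2)σ_i − Σ_{i,j∈J} a_{ij} σ_i σ_j. -/
def Lam {n : ℕ} (A : Matrix (Fin n) (Fin n) ℝ) (β : Fin n → ℝ)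
    (J : Finset (Fin n)) (σ : Fin n → ℝ) : ℝ :=
  2 * ∑ i ∈ J, (β i + 2) * σ i - ∑ i ∈ J, ∑ j ∈ J, A i j * σ i * σ j

/-! Put `t = log r`, `b_i = β_i + 2` and `E_i = e^{u_i + b_i t}`. A kernel vector of the Jacobian,
extended by `α_n = 0`, is a direction `α` in which the initial values can be varied so that only the
energy `σ_n` changes to first order. Gronwall estimates in exponential weights bound the difference
quotients along `α`, so they have a limit `(d, w)` solving the linearized system `d' = -A w`, `w' =
E d`, with `d(-∞) = α`, `w(-∞) = 0` and `w(+∞) = τ`, the derivative of the energy. The linearized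
Pohozaev identity `∑ (b_i - (A σ)_i) τ_i = 0`, in which finite energy makes every coefficient
negative, gives `τ_n = 0` as well. Now `z_i = w_i / E_i` satisfies `(E_i z_i')' = ∑ A_{ij} E_i E_j
(z_i - z_j)`, and `τ = 0` makes `E z z'` vanish at both ends, so testing the equation with `z`
yields `∑ ∫ E_i z_i'^2 + ½ ∑ ∫ A_{ij} E_i E_j (z_i - z_j)^2 = 0`. By irreducibility all `z_i`
coincide, hence so do their limits `α_i / b_i` at `-∞`; these vanish since `α_n = 0`. -/

open Filter Topology

section Calculus

variable {F : Type*} [NormedAddCommGroup F] [NormedSpace ℝ F] {f f' : ℝ → F} {h h' : ℝ → ℝ}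

lemma norm_sub_le_sub_of_norm_deriv_le {s t : ℝ} (hst : s ≤ t)
    (hf : ∀ r ∈ Icc s t, HasDerivAt f (f' r) r) (hh : ∀ r ∈ Icc s t, HasDerivAt h (h' r) r)
    (bound : ∀ r ∈ Icc s t, ‖f' r‖ ≤ h' r) : ‖f t - f s‖ ≤ h t - h s := by
  refine image_norm_le_of_norm_deriv_right_le_deriv_boundary'
    (f := fun r ↦ f r - f s) (f' := f') (B := fun r ↦ h r - h s) (B' := h')
    (fun r hr ↦ ((hf r hr).sub_const _).continuousAt.continuousWithinAt)
    (fun r hr ↦ ((hf r (Ico_subset_Icc_self hr)).sub_const _).hasDerivWithinAt) (by simp)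
    (fun r hr ↦ ((hh r hr).sub_const _).continuousAt.continuousWithinAt)
    (fun r hr ↦ ((hh r (Ico_subset_Icc_self hr)).sub_const _).hasDerivWithinAt)
    (fun r hr ↦ bound r (Ico_subset_Icc_self hr)) ⟨hst, le_rfl⟩

lemma norm_sub_le_of_norm_deriv_le_of_tendsto_atBot {t : ℝ} {l : F}
    (hf : ∀ r ≤ t, HasDerivAt f (f' r) r) (hh : ∀ r ≤ t, HasDerivAt h (h' r) r)
    (bound : ∀ r ≤ t, ‖f' r‖ ≤ h' r) (hl : Tendsto f atBot (𝓝 l))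
    (h0 : Tendsto h atBot (𝓝 0)) : ‖f t - l‖ ≤ h t := by
  have hlim : Tendsto (fun s ↦ h t - h s) atBot (𝓝 (h t)) := by
    simpa using tendsto_const_nhds.sub h0
  refine le_of_tendsto_of_tendsto (tendsto_const_nhds.sub hl).norm hlim ?_
  filter_upwards [eventually_le_atBot t] with s hs
  exact norm_sub_le_sub_of_norm_deriv_le hs (fun r hr ↦ hf r hr.2) (fun r hr ↦ hh r hr.2)
    fun r hr ↦ bound r hr.2

lemma norm_sub_le_of_norm_deriv_le_of_tendsto_atTop {t : ℝ} {l : F}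
    (hf : ∀ r, t ≤ r → HasDerivAt f (f' r) r) (hh : ∀ r, t ≤ r → HasDerivAt h (h' r) r)
    (bound : ∀ r, t ≤ r → ‖f' r‖ ≤ -h' r) (hl : Tendsto f atTop (𝓝 l))
    (h0 : Tendsto h atTop (𝓝 0)) : ‖f t - l‖ ≤ h t := by
  have hlim : Tendsto (fun s ↦ h t - h s) atTop (𝓝 (h t)) := by
    simpa using tendsto_const_nhds.sub h0
  refine le_of_tendsto_of_tendsto (tendsto_const_nhds.sub hl).norm hlim ?_
  filter_upwards [eventually_ge_atTop t] with s hs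
  have := norm_sub_le_sub_of_norm_deriv_le hs (fun r hr ↦ hf r hr.1)
    (fun r hr ↦ (hh r hr.1).neg) fun r hr ↦ bound r hr.1
  rw [norm_sub_rev]
  simpa [neg_add_eq_sub] using this

lemma le_mul_exp_of_deriv_le {Q Q' ρ k : ℝ → ℝ} {s t : ℝ} (hst : s ≤ t)
    (hQ : ∀ r ∈ Icc s t, HasDerivAt Q (Q' r) r) (hρ : ∀ r ∈ Icc s t, HasDerivAt ρ (k r) r)
    (bound : ∀ r ∈ Icc s t, Q' r ≤ k r * Q r) : Q t ≤ Q s * Real.exp (ρ t - ρ s) := by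
  have hder : ∀ r ∈ Icc s t, HasDerivAt (fun r ↦ Q r * Real.exp (-ρ r))
      ((Q' r - k r * Q r) * Real.exp (-ρ r)) r := fun r hr ↦
    ((hQ r hr).mul (hρ r hr).fun_neg.exp).congr_deriv (by ring)
  have hanti : AntitoneOn (fun r ↦ Q r * Real.exp (-ρ r)) (Icc s t) :=
    antitoneOn_of_hasDerivWithinAt_nonpos (convex_Icc s t)
      (fun r hr ↦ (hder r hr).continuousAt.continuousWithinAt)
      (fun r hr ↦ (hder r (interior_subset hr)).hasDerivWithinAt)
      fun r hr ↦ mul_nonpos_of_nonpos_of_nonneg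
        (sub_nonpos.2 (bound r (interior_subset hr))) (Real.exp_nonneg _)
  calc Q t = Q t * Real.exp (-ρ t) * Real.exp (ρ t) := by
        rw [mul_assoc, ← Real.exp_add, neg_add_cancel, Real.exp_zero, mul_one]
    _ ≤ Q s * Real.exp (-ρ s) * Real.exp (ρ t) :=
        mul_le_mul_of_nonneg_right (hanti ⟨le_rfl, hst⟩ ⟨hst, le_rfl⟩ hst) (Real.exp_nonneg _)
    _ = Q s * Real.exp (ρ t - ρ s) := by rw [mul_assoc, ← Real.exp_add, neg_add_eq_sub]

lemma tendsto_exp_const_mul_atBot {k : ℝ} (hk : 0 < k) :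
    Tendsto (fun t ↦ Real.exp (k * t)) atBot (𝓝 0) :=
  Real.tendsto_exp_atBot.comp (tendsto_id.const_mul_atBot hk)

lemma tendsto_exp_neg_const_mul_atTop {k : ℝ} (hk : 0 < k) :
    Tendsto (fun t ↦ Real.exp (-(k * t))) atTop (𝓝 0) :=
  Real.tendsto_exp_neg_atTop_nhds_zero.comp (tendsto_id.const_mul_atTop hk)

lemma hasDerivAt_exp_const_mul (k t : ℝ) :
    HasDerivAt (fun s ↦ Real.exp (k * s)) (k * Real.exp (k * t)) t :=
  ((hasDerivAt_id t).const_mul k).exp.congr_deriv (by simp [mul_comm])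

lemma eq_of_tendsto_atBot_of_deriv_eq_zero {g : ℝ → F} {l : F} (hg : ∀ t, HasDerivAt g 0 t)
    (hl : Tendsto g atBot (𝓝 l)) (t : ℝ) : g t = l := by
  have hconst : ∀ s, g s = g t := fun s ↦
    is_const_of_deriv_eq_zero (fun r ↦ (hg r).differentiableAt) (fun r ↦ (hg r).deriv) s t
  exact tendsto_nhds_unique (tendsto_const_nhds.congr fun s ↦ (hconst s).symm) hl

lemma abs_exp_sub_exp_le {x y M : ℝ} (hx : Real.exp x ≤ M) (hy : Real.exp y ≤ M) :
    |Real.exp y - Real.exp x| ≤ M * |y - x| := by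
  have key : ∀ {x y : ℝ}, x ≤ y → Real.exp y ≤ M → |Real.exp y - Real.exp x| ≤ M * |y - x| := by
    intro x y hxy hy
    have hmul := mul_le_mul_of_nonneg_left (Real.add_one_le_exp (x - y)) (Real.exp_nonneg y)
    rw [← Real.exp_add, add_sub_cancel] at hmul
    rw [abs_of_nonneg (sub_nonneg.2 (Real.exp_le_exp.2 hxy)), abs_of_nonneg (sub_nonneg.2 hxy)]
    calc Real.exp y - Real.exp x ≤ Real.exp y * (y - x) := by linarith
      _ ≤ M * (y - x) := mul_le_mul_of_nonneg_right hy (sub_nonneg.2 hxy)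
  rcases le_total x y with hxy | hxy
  · exact key hxy hy
  · rw [abs_sub_comm, abs_sub_comm y]
    exact key hxy hx

lemma exists_pos_forall_lt {ι : Type*} [Finite ι] {x : ι → ℝ} (hx : ∀ i, 0 < x i) :
    ∃ η > 0, ∀ i, η < x i := by
  have hev : ∀ᶠ η in 𝓝[>] (0 : ℝ), ∀ i, η < x i :=
    eventually_all.2 fun i ↦ eventually_nhdsWithin_of_eventually_nhds (eventually_lt_nhds (hx i))
  exact (eventually_mem_nhdsWithin.and hev).exists

end Calculus

section LogSolution

variable {ι : Type*}

/-- The energy density `e^{u_i + b_i t}` of a radial solution in the variable `t = log r`, where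
`b_i = β_i + 2`. -/
noncomputable def density (b : ι → ℝ) (u : ι → ℝ → ℝ) (i : ι) (t : ℝ) : ℝ :=
  Real.exp (u i t + b i * t)

/-- Exponential decay on `s` of all components of a density. The rate is written `4η` because
differences of two solutions are later measured in weights of size at most `e^{2η|t|}`. -/
def DecaysOn (E : ι → ℝ → ℝ) (C η : ℝ) (s : Set ℝ) : Prop :=
  ∀ i, ∀ t ∈ s, E i t ≤ C * Real.exp (-(4 * η * |t|))

lemma DecaysOn.mono {E : ι → ℝ → ℝ} {C η : ℝ} {s s' : Set ℝ} (h : DecaysOn E C η s)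
    (hs : s' ⊆ s) : DecaysOn E C η s' :=
  fun i t ht ↦ h i t (hs ht)

lemma density_pos (b : ι → ℝ) (u : ι → ℝ → ℝ) (i : ι) (t : ℝ) : 0 < density b u i t :=
  Real.exp_pos _

lemma DecaysOn.const_pos {b : ι → ℝ} {u : ι → ℝ → ℝ} {C η t : ℝ} {s : Set ℝ}
    (h : DecaysOn (density b u) C η s) (i : ι) (ht : t ∈ s) : 0 < C :=
  pos_of_mul_pos_left ((density_pos b u i t).trans_le (h i t ht)) (Real.exp_nonneg _)

variable [Fintype ι]

/-- The logarithmic derivative `b_i - (A V)_i` of the density whose primitive is `V`. -/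
def logSlope (A : Matrix ι ι ℝ) (b : ι → ℝ) (V : ι → ℝ → ℝ) (i : ι) (t : ℝ) : ℝ :=
  b i - ∑ j, A i j * V j t

/-- A finite-energy radial solution of the Liouville system in the variable `t = log r`, with value
`c` at the origin and energy `σ`, written as a first-order system for `u` and the partial energies
`V i t`, the energies of the discs of radius `e^t`. -/
structure IsLogSolution (A : Matrix ι ι ℝ) (b c : ι → ℝ) (u V : ι → ℝ → ℝ) (σ : ι → ℝ) :
    Prop where
  hasDerivAt_u : ∀ i t, HasDerivAt (u i) (-∑ j, A i j * V j t) t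
  hasDerivAt_V : ∀ i t, HasDerivAt (V i) (density b u i t) t
  tendsto_u_atBot : ∀ i, Tendsto (u i) atBot (𝓝 (c i))
  tendsto_V_atBot : ∀ i, Tendsto (V i) atBot (𝓝 0)
  tendsto_V_atTop : ∀ i, Tendsto (V i) atTop (𝓝 (σ i))

namespace IsLogSolution

variable {A : Matrix ι ι ℝ} {b c : ι → ℝ} {u V : ι → ℝ → ℝ} {σ : ι → ℝ}

lemma monotone_V (h : IsLogSolution A b c u V σ) (i : ι) : Monotone (V i) :=
  monotone_of_hasDerivAt_nonneg (h.hasDerivAt_V i) fun t ↦ (density_pos b u i t).le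

lemma V_nonneg (h : IsLogSolution A b c u V σ) (i : ι) (t : ℝ) : 0 ≤ V i t :=
  (h.monotone_V i).le_of_tendsto (h.tendsto_V_atBot i) t

lemma V_le (h : IsLogSolution A b c u V σ) (i : ι) (t : ℝ) : V i t ≤ σ i :=
  (h.monotone_V i).ge_of_tendsto (h.tendsto_V_atTop i) t

lemma tendsto_logSlope_atBot (h : IsLogSolution A b c u V σ) (i : ι) :
    Tendsto (logSlope A b V i) atBot (𝓝 (b i)) := by
  have hsum := tendsto_finsetSum Finset.univ fun j _ ↦ (h.tendsto_V_atBot j).const_mul (A i j)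
  have hlim := hsum.const_sub (b i)
  simp only [mul_zero, Finset.sum_const_zero, sub_zero] at hlim
  exact hlim

lemma tendsto_logSlope_atTop (h : IsLogSolution A b c u V σ) (i : ι) :
    Tendsto (logSlope A b V i) atTop (𝓝 (b i - ∑ j, A i j * σ j)) :=
  tendsto_const_nhds.sub
    (tendsto_finsetSum Finset.univ fun j _ ↦ (h.tendsto_V_atTop j).const_mul (A i j))

lemma hasDerivAt_logSlope (h : IsLogSolution A b c u V σ) (i : ι) (t : ℝ) :
    HasDerivAt (logSlope A b V i) (-∑ j, A i j * density b u j t) t :=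
  (HasDerivAt.fun_sum fun j _ ↦ (h.hasDerivAt_V j t).const_mul (A i j)).const_sub (b i)

lemma hasDerivAt_log_density (h : IsLogSolution A b c u V σ) (i : ι) (t : ℝ) :
    HasDerivAt (fun s ↦ u i s + b i * s) (logSlope A b V i t) t :=
  ((h.hasDerivAt_u i t).add ((hasDerivAt_id t).const_mul (b i))).congr_deriv
    (by simp only [logSlope, mul_one]; ring)

lemma hasDerivAt_density (h : IsLogSolution A b c u V σ) (i : ι) (t : ℝ) :
    HasDerivAt (density b u i) (density b u i t * logSlope A b V i t) t :=
  (h.hasDerivAt_log_density i t).exp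

lemma exists_logSlope_neg (h : IsLogSolution A b c u V σ) (i : ι) :
    ∃ t, logSlope A b V i t < 0 := by
  by_contra! hp
  have hmono : Monotone (density b u i) := monotone_of_hasDerivAt_nonneg (h.hasDerivAt_density i)
    fun t ↦ mul_nonneg (density_pos b u i t).le (hp t)
  have hstep : ∀ t ≥ 0, density b u i 0 ≤ V i (t + 1) - V i t := fun t ht ↦ by
    have := norm_sub_le_sub_of_norm_deriv_le (le_add_of_nonneg_right zero_le_one)
      (fun r _ ↦ (hasDerivAt_id r).const_mul (density b u i 0)) (fun r _ ↦ h.hasDerivAt_V i r)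
      (fun r hr ↦ by
        simpa [abs_of_pos (density_pos b u i 0)] using hmono (ht.trans hr.1))
      (s := t) (t := t + 1)
    simpa [← mul_sub, abs_of_pos (density_pos b u i 0)] using this
  have hlim : Tendsto (fun t ↦ V i (t + 1) - V i t) atTop (𝓝 0) := by
    simpa using ((h.tendsto_V_atTop i).comp (tendsto_atTop_add_const_right _ 1 tendsto_id)).sub
      (h.tendsto_V_atTop i)
  exact (density_pos b u i 0).not_ge (ge_of_tendsto hlim (eventually_atTop.2 ⟨0, hstep⟩))

section Nonneg

variable (hA : ∀ i j, 0 ≤ A i j)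
include hA

lemma antitone_logSlope (h : IsLogSolution A b c u V σ) (i : ι) :
    Antitone (logSlope A b V i) :=
  fun _ _ hst ↦ sub_le_sub_left
    (Finset.sum_le_sum fun j _ ↦ mul_le_mul_of_nonneg_left (h.monotone_V j hst) (hA i j)) _

lemma u_le (h : IsLogSolution A b c u V σ) (i : ι) (t : ℝ) : u i t ≤ c i := by
  have hanti : Antitone (u i) := antitone_of_hasDerivAt_nonpos (h.hasDerivAt_u i) fun s ↦
    neg_nonpos.2 (Finset.sum_nonneg fun j _ ↦ mul_nonneg (hA i j) (h.V_nonneg j s))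
  exact hanti.ge_of_tendsto (h.tendsto_u_atBot i) t

lemma lt_sum_mul_energy (h : IsLogSolution A b c u V σ) (i : ι) :
    b i < ∑ j, A i j * σ j := by
  obtain ⟨t, ht⟩ := h.exists_logSlope_neg i
  have hlim := (h.antitone_logSlope hA i).le_of_tendsto (h.tendsto_logSlope_atTop i) t
  exact sub_neg.1 (hlim.trans_lt ht)

lemma log_density_le (h : IsLogSolution A b c u V σ) {i : ι} {k T t : ℝ}
    (hk : logSlope A b V i T ≤ -k) (ht : T ≤ t) :
    u i t + b i * t ≤ u i T + b i * T - k * (t - T) := by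
  have hanti : AntitoneOn (fun s ↦ u i s + b i * s + k * s) (Ici T) :=
    antitoneOn_of_hasDerivWithinAt_nonpos (convex_Ici T)
      (f' := fun s ↦ logSlope A b V i s + k * 1)
      (fun s _ ↦ ((h.hasDerivAt_log_density i s).add
        ((hasDerivAt_id s).const_mul k)).continuousAt.continuousWithinAt)
      (fun s _ ↦ ((h.hasDerivAt_log_density i s).add
        ((hasDerivAt_id s).const_mul k)).hasDerivWithinAt)
      fun s hs ↦ by linarith [h.antitone_logSlope hA i (interior_subset hs)]
  have := hanti self_mem_Ici ht ht
  dsimp only at this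
  linarith

lemma decaysOn_Iic (h : IsLogSolution A b c u V σ) {C η T : ℝ} (hη : 0 ≤ η) (hT : 0 ≤ T)
    (hb : ∀ i, 4 * η ≤ b i) (hC : ∀ i, Real.exp (c i + (b i + 4 * η) * T) ≤ C) :
    DecaysOn (density b u) C η (Iic T) := fun i t ht ↦ by
  refine le_trans ?_ (mul_le_mul_of_nonneg_right (hC i) (Real.exp_nonneg _))
  rw [← Real.exp_add, density, Real.exp_le_exp]
  have hu := h.u_le hA i t
  have hsum : 0 ≤ b i + 4 * η := by linarith [hb i]
  rcases le_total 0 t with ht0 | ht0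
  · rw [abs_of_nonneg ht0]
    nlinarith [mul_le_mul_of_nonneg_left (mem_Iic.1 ht) hsum]
  · rw [abs_of_nonpos ht0]
    nlinarith [mul_nonneg hsum hT, hb i]

lemma decaysOn_univ (h : IsLogSolution A b c u V σ) {C η T : ℝ} (hη : 0 ≤ η) (hT : 0 ≤ T)
    (hb : ∀ i, 4 * η ≤ b i) (hC : ∀ i, Real.exp (c i + (b i + 4 * η) * T) ≤ C)
    (hslope : ∀ i, logSlope A b V i T ≤ -(4 * η)) :
    DecaysOn (density b u) C η univ := fun i t _ ↦ by
  rcases le_total t T with ht | ht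
  · exact h.decaysOn_Iic hA hη hT hb hC i t ht
  · refine le_trans ?_ (mul_le_mul_of_nonneg_right (hC i) (Real.exp_nonneg _))
    rw [← Real.exp_add, density, Real.exp_le_exp, abs_of_nonneg (hT.trans ht)]
    linarith [h.log_density_le hA (hslope i) ht, h.u_le hA i T]

lemma exists_logSlope_lt (h : IsLogSolution A b c u V σ) (hb : ∀ i, 0 < b i) :
    ∃ η > 0, ∃ T ≥ 0, (∀ i, 4 * η ≤ b i) ∧ ∀ i, logSlope A b V i T < -(4 * η) := by
  obtain ⟨k, hk, hkb⟩ := exists_pos_forall_lt fun i ↦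
    lt_min (hb i) (sub_pos.2 (h.lt_sum_mul_energy hA i))
  have hev : ∀ᶠ T in atTop, ∀ i, logSlope A b V i T < -k := eventually_all.2 fun i ↦
    (h.tendsto_logSlope_atTop i).eventually_lt_const
      (by linarith [(hkb i).trans_le (min_le_right _ _)])
  obtain ⟨T, hT, hT0⟩ := (hev.and (eventually_ge_atTop 0)).exists
  refine ⟨k / 4, by positivity, T, hT0, fun i ↦ ?_, fun i ↦ ?_⟩
  · linarith [(hkb i).trans_le (min_le_left _ _)]
  · linarith [hT i]

lemma exists_decaysOn_univ (h : IsLogSolution A b c u V σ) (hb : ∀ i, 0 < b i) :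
    ∃ C, ∃ η > 0, DecaysOn (density b u) C η univ := by
  obtain ⟨η, hη, T, hT, hηb, hslope⟩ := h.exists_logSlope_lt hA hb
  exact ⟨_, η, hη, h.decaysOn_univ hA hη.le hT hηb
    (fun i ↦ Finset.single_le_sum (f := fun i ↦ Real.exp (c i + (b i + 4 * η) * T))
      (fun _ _ ↦ Real.exp_nonneg _) (Finset.mem_univ i)) fun i ↦ (hslope i).le⟩

end Nonneg

end IsLogSolution

end LogSolution

section Radial

lemma tendsto_deriv_zero_of_antitone_of_tendsto_atBot {f f' : ℝ → ℝ} {l : ℝ}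
    (hf : ∀ t, HasDerivAt f (f' t) t) (hf' : Antitone f') (hl : Tendsto f atBot (𝓝 l)) :
    Tendsto f' atBot (𝓝 0) := by
  have mean (s t : ℝ) (hst : s < t) : ∃ r ∈ Ioo s t, f' r = (f t - f s) / (t - s) :=
    exists_hasDerivAt_eq_slope f f' hst (fun r _ ↦ (hf r).continuousAt.continuousWithinAt)
      fun r _ ↦ hf r
  have increment (k : ℝ) : Tendsto (fun t ↦ f (t + (k + 1)) - f (t + k)) atBot (𝓝 0) := by
    simpa using (hl.comp (tendsto_atBot_add_const_right _ (k + 1) tendsto_id)).sub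
      (hl.comp (tendsto_atBot_add_const_right _ k tendsto_id))
  refine tendsto_of_tendsto_of_tendsto_of_le_of_le (increment 0) (increment (-1))
    (fun t ↦ ?_) fun t ↦ ?_
  · obtain ⟨r, hr, heq⟩ := mean t (t + 1) (by linarith)
    simpa [heq] using hf' hr.1.le
  · obtain ⟨r, hr, heq⟩ := mean (t - 1) t (by linarith)
    simpa [heq, sub_eq_add_neg] using hf' hr.2.le

/-- The energy of the `i`-th component in the disc of radius `e^t`, divided by `2π`. -/
noncomputable def partialEnergy {n : ℕ} (β : Fin n → ℝ) (U : Fin n → ℝ → ℝ) (i : Fin n)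
    (t : ℝ) : ℝ :=
  ∫ r in 0..Real.exp t, r ^ (β i + 1) * Real.exp (U i r)

namespace RadialSolution

variable {n : ℕ} {A : Matrix (Fin n) (Fin n) ℝ} {β : Fin n → ℝ} {U : Fin n → ℝ → ℝ}

lemma hasDerivAt_comp_exp (h : RadialSolution A β U) (i : Fin n) (t : ℝ) :
    HasDerivAt (fun s ↦ U i (Real.exp s)) (deriv (U i) (Real.exp t) * Real.exp t) t :=
  ((h.1 i _ (Real.exp_pos t)).differentiableAt two_ne_zero).hasDerivAt.comp t
    (Real.hasDerivAt_exp t)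

lemma hasDerivAt_flux (h : RadialSolution A β U) (i : Fin n) (t : ℝ) :
    HasDerivAt (fun s ↦ deriv (U i) (Real.exp s) * Real.exp s)
      (-∑ j, A i j * density (fun k ↦ β k + 2) (fun k s ↦ U k (Real.exp s)) j t) t := by
  have hsum : ∑ j, A i j * density (fun k ↦ β k + 2) (fun k s ↦ U k (Real.exp s)) j t =
      Real.exp t ^ 2 * ∑ j, A i j * Real.exp t ^ β j * Real.exp (U j (Real.exp t)) := by
    rw [Finset.mul_sum]
    refine Finset.sum_congr rfl fun j _ ↦ ?_
    rw [density, Real.exp_add, add_mul, Real.exp_add, mul_comm (β j), Real.exp_mul,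
      ← Nat.cast_two, Real.exp_nat_mul]
    ring
  have hderiv : HasDerivAt (deriv (U i)) (deriv (deriv (U i)) (Real.exp t)) (Real.exp t) :=
    (((h.1 i _ (Real.exp_pos t)).derivWithin one_add_one_eq_two.le).differentiableAt
      one_ne_zero).hasDerivAt
  refine ((hderiv.comp t (Real.hasDerivAt_exp t)).mul (Real.hasDerivAt_exp t)).congr_deriv ?_
  have hode := h.2.1 i _ (Real.exp_pos t)
  have hinv : Real.exp t * (1 / Real.exp t) = 1 := mul_one_div_cancel (Real.exp_ne_zero t)
  simp only [Function.comp_apply, hsum]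
  linear_combination Real.exp t ^ 2 * hode - Real.exp t * deriv (U i) (Real.exp t) * hinv

lemma hasDerivAt_partialEnergy (h : RadialSolution A β U) (i : Fin n) (t : ℝ) :
    HasDerivAt (partialEnergy β U i)
      (density (fun k ↦ β k + 2) (fun k s ↦ U k (Real.exp s)) i t) t := by
  have hpos := Real.exp_pos t
  have hcont : ∀ r > 0, ContinuousAt (fun r : ℝ ↦ r ^ (β i + 1) * Real.exp (U i r)) r :=
    fun r hr ↦ (Real.continuousAt_rpow_const _ _ (.inl hr.ne')).mul
      (h.1 i r hr).continuousAt.rexp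
  have hint : IntervalIntegrable (fun r : ℝ ↦ r ^ (β i + 1) * Real.exp (U i r)) volume 0
      (Real.exp t) :=
    (intervalIntegrable_iff_integrableOn_Ioc_of_le hpos.le).2
      ((h.2.2 i).mono_set Ioc_subset_Ioi_self)
  have hmeas : StronglyMeasurableAtFilter (fun r : ℝ ↦ r ^ (β i + 1) * Real.exp (U i r))
      (𝓝 (Real.exp t)) :=
    ContinuousAt.stronglyMeasurableAtFilter isOpen_Ioi hcont _ hpos
  refine ((intervalIntegral.integral_hasDerivAt_right hint hmeas (hcont _ hpos)).comp t
    (Real.hasDerivAt_exp t)).congr_deriv ?_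
  rw [density, ← Real.exp_mul, ← Real.exp_add, ← Real.exp_add]
  ring_nf

lemma tendsto_partialEnergy_atBot (h : RadialSolution A β U) (i : Fin n) :
    Tendsto (partialEnergy β U i) atBot (𝓝 0) := by
  have hprim : ContinuousOn (fun R ↦ ∫ r in 0..R, r ^ (β i + 1) * Real.exp (U i r))
      (uIcc 0 1) := by
    refine intervalIntegral.continuousOn_primitive_interval' (b₁ := 0) (b₂ := 1) ?_ left_mem_uIcc
    exact (intervalIntegrable_iff_integrableOn_Ioc_of_le zero_le_one).2
      ((h.2.2 i).mono_set Ioc_subset_Ioi_self)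
  have hexp : Tendsto Real.exp atBot (𝓝[uIcc 0 1] 0) := by
    refine tendsto_nhdsWithin_iff.2 ⟨Real.tendsto_exp_atBot, ?_⟩
    filter_upwards [eventually_le_atBot 0] with t ht
    exact uIcc_of_le (zero_le_one' ℝ) ▸ ⟨Real.exp_nonneg t, Real.exp_le_one_iff.2 ht⟩
  have hlim := (hprim 0 left_mem_uIcc).tendsto.comp hexp
  rwa [intervalIntegral.integral_same] at hlim

theorem isLogSolution (h : RadialSolution A β U) (hA : ∀ i j, 0 ≤ A i j)
    (hcont : ∀ i, ContinuousWithinAt (U i) (Ici 0) 0) :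
    IsLogSolution A (fun i ↦ β i + 2) (fun i ↦ U i 0) (fun i t ↦ U i (Real.exp t))
      (partialEnergy β U) (energy β U) := by
  have hu_lim : ∀ i, Tendsto (fun t ↦ U i (Real.exp t)) atBot (𝓝 (U i 0)) := fun i ↦
    (hcont i).tendsto.comp (tendsto_nhdsWithin_iff.2
      ⟨Real.tendsto_exp_atBot, Eventually.of_forall fun t ↦ Real.exp_nonneg t⟩)
  have hflux_lim : ∀ i, Tendsto (fun t ↦ deriv (U i) (Real.exp t) * Real.exp t) atBot (𝓝 0) :=
    fun i ↦ tendsto_deriv_zero_of_antitone_of_tendsto_atBot (h.hasDerivAt_comp_exp i)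
      (antitone_of_hasDerivAt_nonpos (h.hasDerivAt_flux i) fun t ↦ neg_nonpos.2
        (Finset.sum_nonneg fun j _ ↦ mul_nonneg (hA i j) (density_pos _ _ j t).le)) (hu_lim i)
  have hflux : ∀ i t, deriv (U i) (Real.exp t) * Real.exp t
      + ∑ j, A i j * partialEnergy β U j t = 0 := fun i t ↦ by
    refine eq_of_tendsto_atBot_of_deriv_eq_zero (fun s ↦ ((h.hasDerivAt_flux i s).fun_add
      (HasDerivAt.fun_sum fun j _ ↦ (h.hasDerivAt_partialEnergy j s).const_mul
        (A i j))).congr_deriv (neg_add_cancel _)) ?_ t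
    simpa using (hflux_lim i).add (tendsto_finsetSum Finset.univ fun j _ ↦
      (h.tendsto_partialEnergy_atBot j).const_mul (A i j))
  exact
    { hasDerivAt_u := fun i t ↦
        (h.hasDerivAt_comp_exp i t).congr_deriv (eq_neg_of_add_eq_zero_left (hflux i t))
      hasDerivAt_V := h.hasDerivAt_partialEnergy
      tendsto_u_atBot := hu_lim
      tendsto_V_atBot := h.tendsto_partialEnergy_atBot
      tendsto_V_atTop := fun i ↦
        intervalIntegral_tendsto_integral_Ioi 0 (h.2.2 i) Real.tendsto_exp_atTop }

end RadialSolution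

end Radial

lemma isBigO_id_of_tendsto_deriv_atTop {F : Type*} [NormedAddCommGroup F] [NormedSpace ℝ F]
    {f f' : ℝ → F} {l : F} (hf : ∀ t, HasDerivAt f (f' t) t) (hl : Tendsto f' atTop (𝓝 l)) :
    f =O[atTop] (id : ℝ → ℝ) := by
  obtain ⟨T, hT⟩ := eventually_atTop.1 (hl.norm.eventually_le_const (lt_add_one ‖l‖))
  have hlin : (fun t ↦ f t - f T) =O[atTop] fun t ↦ t - T := by
    refine Asymptotics.IsBigO.of_bound (‖l‖ + 1) ?_
    filter_upwards [eventually_ge_atTop T] with t ht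
    have := norm_sub_le_sub_of_norm_deriv_le ht (fun r _ ↦ hf r)
      (fun r _ ↦ (hasDerivAt_id r).const_mul (‖l‖ + 1)) fun r hr ↦ by simpa using hT r hr.1
    rwa [Real.norm_of_nonneg (sub_nonneg.2 ht), mul_sub]
  have hsub : (fun t : ℝ ↦ t - T) =O[atTop] (id : ℝ → ℝ) :=
    (Asymptotics.isBigO_refl _ _).sub (Asymptotics.isLittleO_const_id_atTop T).isBigO
  simpa using (hlin.trans hsub).add (Asymptotics.isLittleO_const_id_atTop (f T)).isBigO

section Symm

variable {ι : Type*} [Fintype ι] {A : Matrix ι ι ℝ}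

lemma sum_sum_mul_antisymm_eq_zero (hA : A.IsSymm) {x : ι → ι → ℝ} (hx : ∀ i j, x j i = -x i j) :
    ∑ i, ∑ j, A i j * x i j = 0 := by
  have hswap : ∑ i, ∑ j, A i j * x i j = -∑ i, ∑ j, A i j * x i j := by
    conv_lhs => rw [Finset.sum_comm]
    simp only [← Finset.sum_neg_distrib, ← mul_neg, ← hx]
    exact Finset.sum_congr rfl fun i _ ↦ Finset.sum_congr rfl fun j _ ↦ by rw [hA.apply]
  linarith

lemma two_mul_sum_sum_mul_antisymm (hA : A.IsSymm) {x : ι → ι → ℝ} (hx : ∀ i j, x j i = -x i j)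
    (y : ι → ℝ) :
    2 * ∑ i, y i * ∑ j, A i j * x i j = ∑ i, ∑ j, A i j * (x i j * (y i - y j)) := by
  have hzero := sum_sum_mul_antisymm_eq_zero hA (x := fun i j ↦ x i j * (y i + y j))
    fun i j ↦ by rw [hx, add_comm]; ring
  rw [← add_zero (∑ i, ∑ j, A i j * (x i j * (y i - y j))), ← hzero, Finset.mul_sum,
    ← Finset.sum_add_distrib]
  refine Finset.sum_congr rfl fun i _ ↦ ?_
  rw [← Finset.sum_add_distrib, Finset.mul_sum, Finset.mul_sum]
  exact Finset.sum_congr rfl fun j _ ↦ by ring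

lemma eq_of_irreducible {X : Type*} [DecidableEq ι]
    (hirr : ∀ S : Finset ι, S.Nonempty → S ≠ Finset.univ → ∃ i ∈ S, ∃ j ∈ Sᶜ, A i j ≠ 0)
    {x : ι → X} (hx : ∀ i j, A i j ≠ 0 → x i = x j) (i j : ι) : x i = x j := by
  classical
  by_contra hij
  obtain ⟨k, hk, l, hl, hkl⟩ := hirr {k | x k = x i} ⟨i, by simp⟩
    fun huniv ↦ hij (Finset.mem_filter.1 (huniv ▸ Finset.mem_univ j)).2.symm
  simp only [Finset.mem_filter, Finset.mem_univ, Finset.mem_compl, true_and] at hk hl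
  exact hl ((hx k l hkl).symm.trans hk)

end Symm

section LinearizedSolution

variable {ι : Type*} [Fintype ι]

/-- A solution `(d, w)` of the linearization of the system of `IsLogSolution` at a solution with
density `E`: the perturbation `d` of `u` starts from `α`, and the perturbation `w` of the partial
energies runs from `0` to the perturbation `τ` of the energy. -/
structure IsLinearizedSolution (A : Matrix ι ι ℝ) (E : ι → ℝ → ℝ) (α τ : ι → ℝ)
    (d w : ι → ℝ → ℝ) : Prop where
  hasDerivAt_d : ∀ i t, HasDerivAt (d i) (-∑ j, A i j * w j t) t
  hasDerivAt_w : ∀ i t, HasDerivAt (w i) (E i t * d i t) t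
  tendsto_d_atBot : ∀ i, Tendsto (d i) atBot (𝓝 (α i))
  tendsto_w_atBot : ∀ i, Tendsto (w i) atBot (𝓝 0)
  tendsto_w_atTop : ∀ i, Tendsto (w i) atTop (𝓝 (τ i))

lemma IsLinearizedSolution.isBigO_d {A : Matrix ι ι ℝ} {E : ι → ℝ → ℝ} {α τ : ι → ℝ}
    {d w : ι → ℝ → ℝ} (h : IsLinearizedSolution A E α τ d w) (i : ι) :
    d i =O[atTop] (id : ℝ → ℝ) :=
  isBigO_id_of_tendsto_deriv_atTop (h.hasDerivAt_d i)
    (tendsto_finsetSum Finset.univ fun j _ ↦ (h.tendsto_w_atTop j).const_mul (A i j)).neg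

namespace IsLogSolution

variable {A : Matrix ι ι ℝ} {b c : ι → ℝ} {u V : ι → ℝ → ℝ} {σ α τ : ι → ℝ} {d w : ι → ℝ → ℝ}

lemma hasDerivAt_sqrt_density (h : IsLogSolution A b c u V σ) (i : ι) (t : ℝ) :
    HasDerivAt (fun s ↦ √(density b u i s)) (√(density b u i t) * logSlope A b V i t / 2) t := by
  refine ((h.hasDerivAt_density i t).sqrt (density_pos b u i t).ne').congr_deriv ?_
  have hsq := Real.mul_self_sqrt (density_pos b u i t).le
  have hne := (Real.sqrt_pos.2 (density_pos b u i t)).ne'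
  field_simp
  linear_combination -logSlope A b V i t * hsq

lemma tendsto_density_atBot (h : IsLogSolution A b c u V σ) {i : ι} (hb : 0 < b i) :
    Tendsto (density b u i) atBot (𝓝 0) :=
  Real.tendsto_exp_atBot.comp
    ((h.tendsto_u_atBot i).add_atBot (tendsto_id.const_mul_atBot hb))

lemma isBigO_sqrt_density_atTop (h : IsLogSolution A b c u V σ) (hA : ∀ i j, 0 ≤ A i j)
    (hb : ∀ i, 0 < b i) :
    ∃ k > 0, ∀ i, (fun t ↦ √(density b u i t)) =O[atTop] fun t ↦ Real.exp (-(k * t)) := by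
  obtain ⟨C, η, hη, hdecay⟩ := h.exists_decaysOn_univ hA hb
  refine ⟨2 * η, by positivity, fun i ↦ Asymptotics.IsBigO.of_bound √C ?_⟩
  filter_upwards [eventually_ge_atTop 0] with t ht
  rw [Real.norm_of_nonneg (Real.sqrt_nonneg _), Real.norm_of_nonneg (Real.exp_nonneg _)]
  calc √(density b u i t) ≤ √(C * Real.exp (-(4 * η * |t|))) :=
        Real.sqrt_le_sqrt (hdecay i t (mem_univ t))
    _ = √C * Real.exp (-(2 * η * t)) := by
        rw [Real.sqrt_mul' _ (Real.exp_nonneg _), ← Real.exp_half, abs_of_nonneg ht]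
        ring_nf

lemma tendsto_sqrt_density_mul_atBot (h : IsLogSolution A b c u V σ)
    (hlin : IsLinearizedSolution A (density b u) α τ d w) {i : ι} (hb : 0 < b i) :
    Tendsto (fun t ↦ √(density b u i t) * d i t) atBot (𝓝 0) := by
  simpa using (h.tendsto_density_atBot hb).sqrt.mul (hlin.tendsto_d_atBot i)

lemma tendsto_sqrt_density_mul_atTop (h : IsLogSolution A b c u V σ) (hA : ∀ i j, 0 ≤ A i j)
    (hb : ∀ i, 0 < b i) (hlin : IsLinearizedSolution A (density b u) α τ d w) (i : ι) :
    Tendsto (fun t ↦ √(density b u i t) * d i t) atTop (𝓝 0) := by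
  obtain ⟨k, hk, hO⟩ := h.isBigO_sqrt_density_atTop hA hb
  refine ((hO i).mul (hlin.isBigO_d i)).trans_tendsto ?_
  refine (isLittleO_pow_exp_pos_mul_atTop 1 hk).tendsto_div_nhds_zero.congr fun t ↦ ?_
  rw [pow_one, Real.exp_neg, id, div_eq_inv_mul]

lemma tendsto_sqrt_density_atTop (h : IsLogSolution A b c u V σ) (hA : ∀ i j, 0 ≤ A i j)
    (hb : ∀ i, 0 < b i) (i : ι) : Tendsto (fun t ↦ √(density b u i t)) atTop (𝓝 0) := by
  obtain ⟨k, hk, hO⟩ := h.isBigO_sqrt_density_atTop hA hb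
  exact (hO i).trans_tendsto (tendsto_exp_neg_const_mul_atTop hk)

end IsLogSolution

end LinearizedSolution

section Rigidity

variable {ι : Type*} [Fintype ι]

/-- The flux `E d - p w`. Where `E` has logarithmic derivative `p`, it equals `E (w / E)'`, and the
linearized system becomes a weighted graph Laplace equation for the ratios `w / E`. -/
def linearizedFlux (E p d w : ι → ℝ → ℝ) (i : ι) (t : ℝ) : ℝ :=
  E i t * d i t - p i t * w i t

/-- The bilinear boundary term `∑ (w / E) (E d - p w)` obtained on testing the linearized system
with the ratios `w / E`. -/
noncomputable def boundaryForm (E p d w : ι → ℝ → ℝ) (t : ℝ) : ℝ :=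
  ∑ i, w i t / E i t * linearizedFlux E p d w i t

namespace IsLogSolution

variable {A : Matrix ι ι ℝ} {b c : ι → ℝ} {u V : ι → ℝ → ℝ} {σ α τ : ι → ℝ} {d w : ι → ℝ → ℝ}

lemma hasDerivAt_linearizedFlux (h : IsLogSolution A b c u V σ)
    (hlin : IsLinearizedSolution A (density b u) α τ d w) (i : ι) (t : ℝ) :
    HasDerivAt (linearizedFlux (density b u) (logSlope A b V) d w i)
      (∑ j, A i j * (density b u j t * w i t - density b u i t * w j t)) t := by
  refine (((h.hasDerivAt_density i t).mul (hlin.hasDerivAt_d i t)).sub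
    ((h.hasDerivAt_logSlope i t).mul (hlin.hasDerivAt_w i t))).congr_deriv ?_
  have hsum : ∑ j, A i j * (density b u j t * w i t - density b u i t * w j t) =
      (∑ j, A i j * density b u j t) * w i t - density b u i t * ∑ j, A i j * w j t := by
    rw [Finset.sum_mul, Finset.mul_sum, ← Finset.sum_sub_distrib]
    exact Finset.sum_congr rfl fun j _ ↦ by ring
  rw [hsum]
  ring

lemma hasDerivAt_w_div_density (h : IsLogSolution A b c u V σ)
    (hlin : IsLinearizedSolution A (density b u) α τ d w) (i : ι) (t : ℝ) :
    HasDerivAt (fun s ↦ w i s / density b u i s)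
      (linearizedFlux (density b u) (logSlope A b V) d w i t / density b u i t) t := by
  have hne := (density_pos b u i t).ne'
  refine ((hlin.hasDerivAt_w i t).div (h.hasDerivAt_density i t) hne).congr_deriv ?_
  rw [linearizedFlux]
  field_simp

lemma hasDerivAt_boundaryForm (h : IsLogSolution A b c u V σ) (hsymm : A.IsSymm)
    (hlin : IsLinearizedSolution A (density b u) α τ d w) (t : ℝ) :
    HasDerivAt (boundaryForm (density b u) (logSlope A b V) d w)
      (∑ i, linearizedFlux (density b u) (logSlope A b V) d w i t ^ 2 / density b u i t
        + (∑ i, ∑ j, A i j * (density b u i t * density b u j t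
          * (w i t / density b u i t - w j t / density b u j t) ^ 2)) / 2) t := by
  refine (HasDerivAt.fun_sum fun i _ ↦ (h.hasDerivAt_w_div_density hlin i t).mul
    (h.hasDerivAt_linearizedFlux hlin i t)).congr_deriv ?_
  have hquad := two_mul_sum_sum_mul_antisymm hsymm
    (x := fun i j ↦ density b u j t * w i t - density b u i t * w j t) (fun i j ↦ by ring)
    fun i ↦ w i t / density b u i t
  rw [Finset.sum_add_distrib, eq_div_of_mul_eq two_ne_zero ((mul_comm _ _).trans hquad)]
  congr 2
  · funext i
    rw [div_mul_eq_mul_div, ← sq]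
  · refine Finset.sum_congr rfl fun i _ ↦ Finset.sum_congr rfl fun j _ ↦ ?_
    have hi := (density_pos b u i t).ne'
    have hj := (density_pos b u j t).ne'
    field_simp

/-- The linearization of the Pohozaev identity `2 ∑ b_i σ_i = ∑ A_{ij} σ_i σ_j`. -/
theorem linearized_pohozaev (h : IsLogSolution A b c u V σ) (hA : ∀ i j, 0 ≤ A i j)
    (hsymm : A.IsSymm) (hb : ∀ i, 0 < b i)
    (hlin : IsLinearizedSolution A (density b u) α τ d w) :
    ∑ i, (b i - ∑ j, A i j * σ j) * τ i = 0 := by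
  have hderiv : ∀ t, HasDerivAt
      (fun t ↦ ∑ i, linearizedFlux (density b u) (logSlope A b V) d w i t) 0 t := fun t ↦
    (HasDerivAt.fun_sum fun i _ ↦ h.hasDerivAt_linearizedFlux hlin i t).congr_deriv
      (sum_sum_mul_antisymm_eq_zero hsymm fun i j ↦ by ring)
  have hbot : Tendsto (fun t ↦ ∑ i, linearizedFlux (density b u) (logSlope A b V) d w i t)
      atBot (𝓝 0) := by
    simpa [linearizedFlux] using tendsto_finsetSum Finset.univ fun i _ ↦
      ((h.tendsto_density_atBot (hb i)).mul (hlin.tendsto_d_atBot i)).sub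
        ((h.tendsto_logSlope_atBot i).mul (hlin.tendsto_w_atBot i))
  have hEd : ∀ i, Tendsto (fun t ↦ density b u i t * d i t) atTop (𝓝 0) := fun i ↦ by
    simpa [← mul_assoc, Real.mul_self_sqrt (density_pos b u i _).le] using
      (h.tendsto_sqrt_density_atTop hA hb i).mul (h.tendsto_sqrt_density_mul_atTop hA hb hlin i)
  have htop := tendsto_finsetSum Finset.univ fun i _ ↦
    (hEd i).sub ((h.tendsto_logSlope_atTop i).mul (hlin.tendsto_w_atTop i))
  have hzero := tendsto_nhds_unique htop (tendsto_const_nhds.congr fun t ↦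
    (eq_of_tendsto_atBot_of_deriv_eq_zero hderiv hbot t).symm)
  simpa using hzero

lemma energy_perturbation_eq_zero (h : IsLogSolution A b c u V σ) (hA : ∀ i j, 0 ≤ A i j)
    (hsymm : A.IsSymm) (hb : ∀ i, 0 < b i)
    (hlin : IsLinearizedSolution A (density b u) α τ d w) {i₀ : ι} (hτ : ∀ i ≠ i₀, τ i = 0) :
    τ = 0 := by
  have hpoh := h.linearized_pohozaev hA hsymm hb hlin
  rw [Finset.sum_eq_single i₀ (fun i _ hi ↦ by rw [hτ i hi, mul_zero]) (by simp)] at hpoh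
  have hτ₀ := (mul_eq_zero.1 hpoh).resolve_left (sub_neg.2 (h.lt_sum_mul_energy hA i₀)).ne
  funext i
  rcases eq_or_ne i i₀ with rfl | hi
  exacts [hτ₀, hτ i hi]

lemma tendsto_w_div_density_atBot (h : IsLogSolution A b c u V σ)
    (hlin : IsLinearizedSolution A (density b u) α τ d w) {i : ι} (hb : 0 < b i) :
    Tendsto (fun t ↦ w i t / density b u i t) atBot (𝓝 (α i / b i)) := by
  have hslope := (h.tendsto_logSlope_atBot i).eventually_ne hb.ne'
  refine HasDerivAt.lhopital_zero_atBot (Eventually.of_forall (hlin.hasDerivAt_w i))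
    (Eventually.of_forall (h.hasDerivAt_density i)) ?_ (hlin.tendsto_w_atBot i)
    (h.tendsto_density_atBot hb) ?_
  · filter_upwards [hslope] with t ht using mul_ne_zero (density_pos b u i t).ne' ht
  · refine ((hlin.tendsto_d_atBot i).div (h.tendsto_logSlope_atBot i) hb.ne').congr fun t ↦ ?_
    exact (mul_div_mul_left _ _ (density_pos b u i t).ne').symm

lemma tendsto_deriv_w_div_deriv_sqrt_density {i : ι} {l : Filter ℝ} {p₀ : ℝ} (hp₀ : p₀ ≠ 0)
    (hd : Tendsto (fun t ↦ √(density b u i t) * d i t) l (𝓝 0))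
    (hp : Tendsto (logSlope A b V i) l (𝓝 p₀)) :
    Tendsto (fun t ↦ density b u i t * d i t / (√(density b u i t) * logSlope A b V i t / 2)) l
      (𝓝 0) := by
  have hlim := (hd.const_mul 2).div hp hp₀
  rw [mul_zero, zero_div] at hlim
  refine hlim.congr fun t ↦ ?_
  have hsq := Real.mul_self_sqrt (density_pos b u i t).le
  have hne := (Real.sqrt_pos.2 (density_pos b u i t)).ne'
  rw [Pi.div_apply]
  nth_rewrite 2 [← hsq]
  field_simp

lemma tendsto_w_div_sqrt_density_atBot (h : IsLogSolution A b c u V σ)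
    (hlin : IsLinearizedSolution A (density b u) α τ d w) {i : ι} (hb : 0 < b i) :
    Tendsto (fun t ↦ w i t / √(density b u i t)) atBot (𝓝 0) := by
  refine HasDerivAt.lhopital_zero_atBot (Eventually.of_forall (hlin.hasDerivAt_w i))
    (Eventually.of_forall (h.hasDerivAt_sqrt_density i)) ?_ (hlin.tendsto_w_atBot i)
    (by simpa using (h.tendsto_density_atBot hb).sqrt)
    (tendsto_deriv_w_div_deriv_sqrt_density hb.ne' (h.tendsto_sqrt_density_mul_atBot hlin hb)
      (h.tendsto_logSlope_atBot i))
  filter_upwards [(h.tendsto_logSlope_atBot i).eventually_ne hb.ne'] with t ht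
  exact div_ne_zero (mul_ne_zero (Real.sqrt_pos.2 (density_pos b u i t)).ne' ht) two_ne_zero

lemma tendsto_w_div_sqrt_density_atTop (h : IsLogSolution A b c u V σ) (hA : ∀ i j, 0 ≤ A i j)
    (hb : ∀ i, 0 < b i) (hlin : IsLinearizedSolution A (density b u) α 0 d w) (i : ι) :
    Tendsto (fun t ↦ w i t / √(density b u i t)) atTop (𝓝 0) := by
  have hp₀ := (sub_neg.2 (h.lt_sum_mul_energy hA i)).ne
  refine HasDerivAt.lhopital_zero_atTop (Eventually.of_forall (hlin.hasDerivAt_w i))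
    (Eventually.of_forall (h.hasDerivAt_sqrt_density i)) ?_ (hlin.tendsto_w_atTop i)
    (h.tendsto_sqrt_density_atTop hA hb i)
    (tendsto_deriv_w_div_deriv_sqrt_density hp₀
      (h.tendsto_sqrt_density_mul_atTop hA hb hlin i) (h.tendsto_logSlope_atTop i))
  filter_upwards [(h.tendsto_logSlope_atTop i).eventually_ne hp₀] with t ht
  exact div_ne_zero (mul_ne_zero (Real.sqrt_pos.2 (density_pos b u i t)).ne' ht) two_ne_zero

lemma tendsto_boundaryForm {l : Filter ℝ} {p₀ : ι → ℝ}
    (hd : ∀ i, Tendsto (fun t ↦ √(density b u i t) * d i t) l (𝓝 0))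
    (hw : ∀ i, Tendsto (fun t ↦ w i t / √(density b u i t)) l (𝓝 0))
    (hp : ∀ i, Tendsto (logSlope A b V i) l (𝓝 (p₀ i))) :
    Tendsto (boundaryForm (density b u) (logSlope A b V) d w) l (𝓝 0) := by
  have hlim := tendsto_finsetSum Finset.univ fun i _ ↦
    ((hw i).mul (hd i)).sub ((hp i).mul ((hw i).pow 2))
  simp only [mul_zero, ne_eq, OfNat.ofNat_ne_zero, not_false_eq_true, zero_pow, sub_zero,
    Finset.sum_const_zero] at hlim
  refine hlim.congr fun t ↦ Finset.sum_congr rfl fun i _ ↦ ?_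
  have hpos := density_pos b u i t
  have hne := (Real.sqrt_pos.2 hpos).ne'
  rw [linearizedFlux, div_pow, Real.sq_sqrt hpos.le]
  field_simp

omit [Fintype ι] in
lemma mul_density_mul_sq_sub_nonneg (hA : ∀ i j, 0 ≤ A i j) (w : ι → ℝ → ℝ) (i j : ι) (t : ℝ) :
    0 ≤ A i j * (density b u i t * density b u j t
      * (w i t / density b u i t - w j t / density b u j t) ^ 2) :=
  mul_nonneg (hA i j)
    (mul_nonneg (mul_pos (density_pos b u i t) (density_pos b u j t)).le (sq_nonneg _))

lemma sum_sq_linearizedFlux_div_nonneg (b : ι → ℝ) (u p d w : ι → ℝ → ℝ) (t : ℝ) :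
    0 ≤ ∑ i, linearizedFlux (density b u) p d w i t ^ 2 / density b u i t :=
  Finset.sum_nonneg fun i _ ↦ div_nonneg (sq_nonneg _) (density_pos b u i t).le

lemma boundaryForm_eq_zero (h : IsLogSolution A b c u V σ) (hA : ∀ i j, 0 ≤ A i j)
    (hsymm : A.IsSymm) (hb : ∀ i, 0 < b i)
    (hlin : IsLinearizedSolution A (density b u) α 0 d w) :
    boundaryForm (density b u) (logSlope A b V) d w = fun _ ↦ 0 := by
  have hmono : Monotone (boundaryForm (density b u) (logSlope A b V) d w) :=
    monotone_of_hasDerivAt_nonneg (h.hasDerivAt_boundaryForm hsymm hlin) fun t ↦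
      add_nonneg (sum_sq_linearizedFlux_div_nonneg b u _ d w t)
        (div_nonneg (Finset.sum_nonneg fun i _ ↦ Finset.sum_nonneg fun j _ ↦
          mul_density_mul_sq_sub_nonneg hA w i j t) zero_le_two)
  have hbot := tendsto_boundaryForm (fun i ↦ h.tendsto_sqrt_density_mul_atBot hlin (hb i))
    (fun i ↦ h.tendsto_w_div_sqrt_density_atBot hlin (hb i)) h.tendsto_logSlope_atBot
  have htop := tendsto_boundaryForm (h.tendsto_sqrt_density_mul_atTop hA hb hlin)
    (h.tendsto_w_div_sqrt_density_atTop hA hb hlin) h.tendsto_logSlope_atTop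
  exact funext fun t ↦ (hmono.ge_of_tendsto htop t).antisymm (hmono.le_of_tendsto hbot t)

theorem w_div_density_eq (h : IsLogSolution A b c u V σ) (hA : ∀ i j, 0 ≤ A i j)
    (hsymm : A.IsSymm) (hb : ∀ i, 0 < b i)
    (hlin : IsLinearizedSolution A (density b u) α 0 d w) {i j : ι} (hij : A i j ≠ 0) (t : ℝ) :
    w i t / density b u i t = w j t / density b u j t := by
  have hderiv := h.hasDerivAt_boundaryForm hsymm hlin t
  rw [h.boundaryForm_eq_zero hA hsymm hb hlin] at hderiv
  have hterm := fun i j ↦ mul_density_mul_sq_sub_nonneg (b := b) (u := u) hA w i j t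
  have hrow := fun i ↦ Finset.sum_nonneg fun j (_ : j ∈ Finset.univ) ↦ hterm i j
  have hquad := (Finset.sum_nonneg fun i (_ : i ∈ Finset.univ) ↦ hrow i).antisymm' (by
    linarith [hderiv.unique (hasDerivAt_const t 0),
      sum_sq_linearizedFlux_div_nonneg b u (logSlope A b V) d w t])
  have hrow_i := (Finset.sum_eq_zero_iff_of_nonneg fun i _ ↦ hrow i).1 hquad i (Finset.mem_univ i)
  have hterm_ij := (Finset.sum_eq_zero_iff_of_nonneg fun j _ ↦ hterm i j).1 hrow_i j
    (Finset.mem_univ j)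
  have hi := (density_pos b u i t).ne'
  have hj := (density_pos b u j t).ne'
  simpa [hij, hi, hj, sub_eq_zero] using hterm_ij

theorem initial_perturbation_eq_zero [DecidableEq ι] (h : IsLogSolution A b c u V σ)
    (hA : ∀ i j, 0 ≤ A i j) (hsymm : A.IsSymm)
    (hirr : ∀ S : Finset ι, S.Nonempty → S ≠ Finset.univ → ∃ i ∈ S, ∃ j ∈ Sᶜ, A i j ≠ 0)
    (hb : ∀ i, 0 < b i) (hlin : IsLinearizedSolution A (density b u) α τ d w) {i₀ : ι}
    (hτ : ∀ i ≠ i₀, τ i = 0) (hα : α i₀ = 0) : α = 0 := by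
  obtain rfl := h.energy_perturbation_eq_zero hA hsymm hb hlin hτ
  have hedge : ∀ i j, A i j ≠ 0 → α i / b i = α j / b j := fun i j hij ↦
    tendsto_nhds_unique (h.tendsto_w_div_density_atBot hlin (hb i))
      ((h.tendsto_w_div_density_atBot hlin (hb j)).congr fun t ↦
        (h.w_div_density_eq hA hsymm hb hlin hij t).symm)
  funext i
  have hi := eq_of_irreducible hirr hedge i i₀
  rwa [hα, zero_div, div_eq_zero_iff, or_iff_left (hb i).ne'] at hi

end IsLogSolution

end Rigidity

section Gronwall

variable {ι : Type*} [Fintype ι]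

lemma sum_sum_mul_two_mul_abs_le {A : Matrix ι ι ℝ} (hA : ∀ i j, 0 ≤ A i j) (x y : ι → ℝ) :
    ∑ i, ∑ j, A i j * (2 * (|x i| * |y j|)) ≤
      (∑ i, ∑ j, A i j) * (∑ i, x i ^ 2 + ∑ i, y i ^ 2) := by
  simp only [Finset.sum_mul]
  refine Finset.sum_le_sum fun i _ ↦ Finset.sum_le_sum fun j _ ↦
    mul_le_mul_of_nonneg_left ?_ (hA i j)
  have hx := Finset.single_le_sum (fun k _ ↦ sq_nonneg (x k)) (Finset.mem_univ i)
  have hy := Finset.single_le_sum (fun k _ ↦ sq_nonneg (y k)) (Finset.mem_univ j)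
  have hxy := two_mul_le_add_sq |x i| |y j|
  rw [sq_abs, sq_abs] at hxy
  linarith

lemma sum_two_mul_abs_le (x y : ι → ℝ) :
    ∑ i, 2 * (|x i| * |y i|) ≤ ∑ i, x i ^ 2 + ∑ i, y i ^ 2 := by
  rw [← Finset.sum_add_distrib]
  refine Finset.sum_le_sum fun i _ ↦ ?_
  have hxy := two_mul_le_add_sq |x i| |y i|
  rw [sq_abs, sq_abs] at hxy
  linarith

lemma one_add_exp_two_mul_le (s : ℝ) : 1 + Real.exp (2 * s) ≤ 2 * Real.exp (s + |s|) := by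
  have hone : 1 ≤ Real.exp (s + |s|) := Real.one_le_exp (by linarith [neg_abs_le s])
  have hexp : Real.exp (2 * s) ≤ Real.exp (s + |s|) :=
    Real.exp_le_exp.2 (by linarith [le_abs_self s])
  linarith

lemma abs_sum_mul_le {A : Matrix ι ι ℝ} (hA : ∀ i j, 0 ≤ A i j) {x : ι → ℝ} {M : ℝ}
    (hx : ∀ j, |x j| ≤ M) (i : ι) : |∑ j, A i j * x j| ≤ (∑ j, A i j) * M := by
  rw [Finset.sum_mul]
  refine (Finset.abs_sum_le_sum_abs _ _).trans (Finset.sum_le_sum fun j _ ↦ ?_)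
  rw [abs_mul, abs_of_nonneg (hA i j)]
  exact mul_le_mul_of_nonneg_left (hx j) (hA i j)

/-- The weighted energy of a perturbation. The weights allow for linear growth of `d` at `+∞` and
exponential decay of `w` at `-∞`. -/
noncomputable def weightedEnergy (η : ℝ) (d w : ι → ℝ → ℝ) (t : ℝ) : ℝ :=
  ∑ i, (d i t / (1 + Real.exp (2 * (η * t)))) ^ 2 + ∑ i, (w i t / Real.exp (η * t)) ^ 2

lemma hasDerivAt_div_sq {x φ : ℝ → ℝ} {x' φ' t : ℝ} (hx : HasDerivAt x x' t)
    (hφ : HasDerivAt φ φ' t) (hφ0 : φ t ≠ 0) :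
    HasDerivAt (fun s ↦ (x s / φ s) ^ 2)
      (2 * (x t / φ t * (x' / φ t - x t / φ t * (φ' / φ t)))) t :=
  ((hx.fun_div hφ hφ0).fun_pow 2).congr_deriv (by norm_num; field_simp)

lemma two_mul_mul_sub_le {x y y' z : ℝ} (hz : 0 ≤ z) (hy : |y| ≤ y') :
    2 * (x * (y - x * z)) ≤ 2 * (|x| * y') := by
  have hxy : x * y ≤ |x| * y' := (le_abs_self _).trans <| by
    rw [abs_mul]
    exact mul_le_mul_of_nonneg_left hy (abs_nonneg x)
  linarith [mul_nonneg (mul_self_nonneg x) hz]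

lemma exp_neg_mul_weight_div_le {η t : ℝ} (hη : 0 ≤ η) :
    Real.exp (-(4 * η * |t|)) * (1 + Real.exp (2 * (η * t))) / Real.exp (η * t) ≤
      4 * (Real.exp (η * t) / (1 + Real.exp (2 * (η * t)))) := by
  have hφ : 0 < 1 + Real.exp (2 * (η * t)) := by positivity
  have habs : |η * t| = η * |t| := by rw [abs_mul, abs_of_nonneg hη]
  have hsq : (1 + Real.exp (2 * (η * t))) ^ 2 ≤ 4 * Real.exp (2 * (η * t) + 2 * (η * |t|)) :=
    calc (1 + Real.exp (2 * (η * t))) ^ 2 ≤ (2 * Real.exp (η * t + η * |t|)) ^ 2 :=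
          pow_le_pow_left₀ hφ.le (habs ▸ one_add_exp_two_mul_le (η * t)) 2
      _ = 4 * Real.exp (2 * (η * t) + 2 * (η * |t|)) := by
          rw [mul_pow, ← Real.exp_nat_mul]; norm_num; ring
  rw [div_le_iff₀ (Real.exp_pos _), ← mul_div_assoc, div_mul_eq_mul_div, le_div_iff₀ hφ]
  calc _ = Real.exp (-(4 * η * |t|)) * (1 + Real.exp (2 * (η * t))) ^ 2 := by ring
    _ ≤ Real.exp (-(4 * η * |t|)) * (4 * Real.exp (2 * (η * t) + 2 * (η * |t|))) := by gcongr
    _ = 4 * Real.exp (2 * (η * t) - 2 * (η * |t|)) := by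
        rw [mul_left_comm, ← Real.exp_add]; congr 2; ring
    _ ≤ 4 * Real.exp (η * t + η * t) := by
        have : 0 ≤ η * |t| := by positivity
        gcongr
        linarith
    _ = _ := by rw [Real.exp_add, mul_assoc]

lemma hasDerivAt_arctan_exp {η : ℝ} (hη : η ≠ 0) (t : ℝ) :
    HasDerivAt (fun s ↦ Real.arctan (Real.exp (η * s)) / η)
      (Real.exp (η * t) / (1 + Real.exp (2 * (η * t)))) t :=
  ((hasDerivAt_exp_const_mul η t).arctan.div_const η).congr_deriv (by
    rw [← Real.exp_nat_mul]
    field_simp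
    push_cast
    ring_nf)

lemma sum_deriv_sq_le {A : Matrix ι ι ℝ} (hA : ∀ i j, 0 ≤ A i j) {C κ a k : ℝ} (hC : 0 ≤ C)
    (hκ : 0 ≤ κ) (ha : 0 ≤ a) (hk : 0 ≤ k) {x y p q : ι → ℝ}
    (hp : ∀ i, |p i| ≤ κ * ∑ j, A i j * |y j|) (hq : ∀ i, |q i| ≤ κ * (C * |x i|)) :
    ∑ i, 2 * (x i * (p i - x i * a)) + ∑ i, 2 * (y i * (q i - y i * k)) ≤
      κ * (∑ i, ∑ j, A i j + C) * (∑ i, x i ^ 2 + ∑ i, y i ^ 2) :=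
  calc ∑ i, 2 * (x i * (p i - x i * a)) + ∑ i, 2 * (y i * (q i - y i * k))
      ≤ ∑ i, 2 * (|x i| * (κ * ∑ j, A i j * |y j|)) + ∑ i, 2 * (|y i| * (κ * (C * |x i|))) :=
        add_le_add (Finset.sum_le_sum fun i _ ↦ two_mul_mul_sub_le ha (hp i))
          (Finset.sum_le_sum fun i _ ↦ two_mul_mul_sub_le hk (hq i))
    _ = κ * (∑ i, ∑ j, A i j * (2 * (|x i| * |y j|)) + C * ∑ i, 2 * (|x i| * |y i|)) := by
        simp only [mul_add, Finset.mul_sum]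
        congr 1
        · exact Finset.sum_congr rfl fun i _ ↦ Finset.sum_congr rfl fun j _ ↦ by ring
        · exact Finset.sum_congr rfl fun i _ ↦ by ring
    _ ≤ κ * ((∑ i, ∑ j, A i j) * (∑ i, x i ^ 2 + ∑ i, y i ^ 2) +
          C * (∑ i, x i ^ 2 + ∑ i, y i ^ 2)) := by
        gcongr
        exacts [sum_sum_mul_two_mul_abs_le hA x y, sum_two_mul_abs_le x y]
    _ = κ * (∑ i, ∑ j, A i j + C) * (∑ i, x i ^ 2 + ∑ i, y i ^ 2) := by ring

lemma abs_neg_sum_div_le {A : Matrix ι ι ℝ} (hA : ∀ i j, 0 ≤ A i j) {φ ψ : ℝ} (hφ : 0 < φ)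
    (hψ : 0 < ψ) (y : ι → ℝ) (i : ι) :
    |(-∑ j, A i j * y j) / φ| ≤ ψ / φ * ∑ j, A i j * |y j / ψ| := by
  rw [abs_div, abs_of_pos hφ, abs_neg, div_mul_eq_mul_div, Finset.mul_sum]
  gcongr
  refine (Finset.abs_sum_le_sum_abs _ _).trans_eq (Finset.sum_congr rfl fun j _ ↦ ?_)
  rw [abs_mul, abs_of_nonneg (hA i j), abs_div, abs_of_pos hψ]
  field_simp

lemma abs_div_exp_le {C η t x y : ℝ} (hη : 0 ≤ η) (hC : 0 ≤ C)
    (hy : |y| ≤ C * Real.exp (-(4 * η * |t|)) * |x|) :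
    |y / Real.exp (η * t)| ≤ Real.exp (η * t) / (1 + Real.exp (2 * (η * t))) *
      (4 * C * |x / (1 + Real.exp (2 * (η * t)))|) := by
  have hφ : 0 < 1 + Real.exp (2 * (η * t)) := by positivity
  rw [abs_div, Real.abs_exp, abs_div, abs_of_pos hφ]
  calc |y| / Real.exp (η * t)
      ≤ C * Real.exp (-(4 * η * |t|)) * |x| / Real.exp (η * t) := by gcongr
    _ = C * (|x| / (1 + Real.exp (2 * (η * t)))) * (Real.exp (-(4 * η * |t|)) *
          (1 + Real.exp (2 * (η * t))) / Real.exp (η * t)) := by field_simp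
    _ ≤ C * (|x| / (1 + Real.exp (2 * (η * t)))) *
          (4 * (Real.exp (η * t) / (1 + Real.exp (2 * (η * t))))) :=
        mul_le_mul_of_nonneg_left (exp_neg_mul_weight_div_le hη) (by positivity)
    _ = _ := by ring

lemma weightedEnergy_nonneg {η : ℝ} {d w : ι → ℝ → ℝ} {t : ℝ} : 0 ≤ weightedEnergy η d w t := by
  unfold weightedEnergy
  positivity

lemma weightedEnergy_le_mul_exp {A : Matrix ι ι ℝ} (hA : ∀ i j, 0 ≤ A i j) {C η s t : ℝ}
    (hη : 0 < η) (hC : 0 ≤ C) {d w e : ι → ℝ → ℝ} (hst : s ≤ t)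
    (hd : ∀ i r, HasDerivAt (d i) (-∑ j, A i j * w j r) r)
    (hw : ∀ i r, HasDerivAt (w i) (e i r) r)
    (he : ∀ i, ∀ r ≤ t, |e i r| ≤ C * Real.exp (-(4 * η * |r|)) * |d i r|) :
    weightedEnergy η d w t ≤ weightedEnergy η d w s *
      Real.exp ((∑ i, ∑ j, A i j + 4 * C) * (Real.pi / (2 * η))) := by
  have hφ : ∀ r, 0 < 1 + Real.exp (2 * (η * r)) := fun r ↦ by positivity
  have hφ' : ∀ r, HasDerivAt (fun r ↦ 1 + Real.exp (2 * (η * r)))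
      (2 * η * Real.exp (2 * (η * r))) r := fun r ↦ by
    simpa only [mul_assoc] using (hasDerivAt_exp_const_mul (2 * η) r).const_add 1
  have hQ : ∀ r, HasDerivAt (weightedEnergy η d w) _ r := fun r ↦
    (HasDerivAt.fun_sum fun i _ ↦ hasDerivAt_div_sq (hd i r) (hφ' r) (hφ r).ne').add
      (HasDerivAt.fun_sum fun i _ ↦ hasDerivAt_div_sq (hw i r) (hasDerivAt_exp_const_mul η r)
        (Real.exp_ne_zero _))
  have hbound := le_mul_exp_of_deriv_le hst (fun r _ ↦ hQ r)
    (fun r _ ↦ (hasDerivAt_arctan_exp hη.ne' r).mul_const (∑ i, ∑ j, A i j + 4 * C))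
    fun r hr ↦ sum_deriv_sq_le hA (by positivity) (by positivity)
      (by positivity) (by positivity) (fun i ↦ ?_) fun i ↦ ?_
  · refine hbound.trans (mul_le_mul_of_nonneg_left (Real.exp_le_exp.2 ?_) weightedEnergy_nonneg)
    have hlt := Real.arctan_lt_pi_div_two (Real.exp (η * t))
    have hpos := Real.arctan_nonneg.2 (Real.exp_nonneg (η * s))
    have hsum : 0 ≤ ∑ i, ∑ j, A i j :=
      Finset.sum_nonneg fun i _ ↦ Finset.sum_nonneg fun j _ ↦ hA i j
    rw [← sub_mul, ← sub_div, mul_comm, ← div_div]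
    gcongr
    linarith
  · exact abs_neg_sum_div_le hA (hφ r) (Real.exp_pos _) (fun j ↦ w j r) i
  · exact abs_div_exp_le hη.le hC (he i r hr.2)

/-- The square root of the factor by which the weighted energy of a perturbation of a solution
with density at most `C * e^{-4η|t|}` can grow. -/
noncomputable def growthConst (A : Matrix ι ι ℝ) (C η : ℝ) : ℝ :=
  Real.exp ((∑ i, ∑ j, A i j + 4 * C) * (Real.pi / (4 * η)))

lemma growthConst_pos (A : Matrix ι ι ℝ) (C η : ℝ) : 0 < growthConst A C η :=
  Real.exp_pos _

lemma tendsto_weightedEnergy_atBot {η : ℝ} (hη : 0 < η) {d w : ι → ℝ → ℝ} {δ : ι → ℝ}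
    (hd : ∀ i, Tendsto (d i) atBot (𝓝 (δ i)))
    (hw : ∀ i, Tendsto (fun t ↦ w i t / Real.exp (η * t)) atBot (𝓝 0)) :
    Tendsto (weightedEnergy η d w) atBot (𝓝 (∑ i, δ i ^ 2)) := by
  have hφ : Tendsto (fun t ↦ 1 + Real.exp (2 * (η * t))) atBot (𝓝 (1 + 0)) := by
    simpa only [mul_assoc] using
      (tendsto_exp_const_mul_atBot (show 0 < 2 * η by positivity)).const_add 1
  have hlim := (tendsto_finsetSum Finset.univ fun i _ ↦ ((hd i).div hφ (by norm_num)).pow 2).add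
    (tendsto_finsetSum Finset.univ fun i _ ↦ (hw i).pow 2)
  simp only [add_zero, div_one, zero_pow two_ne_zero, Finset.sum_const_zero] at hlim
  exact hlim

lemma weightedEnergy_le {A : Matrix ι ι ℝ} (hA : ∀ i j, 0 ≤ A i j) {C η t : ℝ} (hη : 0 < η)
    (hC : 0 ≤ C) {d w e : ι → ℝ → ℝ} {δ : ι → ℝ}
    (hd : ∀ i r, HasDerivAt (d i) (-∑ j, A i j * w j r) r)
    (hw : ∀ i r, HasDerivAt (w i) (e i r) r)
    (he : ∀ i, ∀ r ≤ t, |e i r| ≤ C * Real.exp (-(4 * η * |r|)) * |d i r|)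
    (hd0 : ∀ i, Tendsto (d i) atBot (𝓝 (δ i)))
    (hw0 : ∀ i, Tendsto (fun r ↦ w i r / Real.exp (η * r)) atBot (𝓝 0)) :
    weightedEnergy η d w t ≤ growthConst A C η ^ 2 * ∑ i, δ i ^ 2 := by
  have hsq : growthConst A C η ^ 2 =
      Real.exp ((∑ i, ∑ j, A i j + 4 * C) * (Real.pi / (2 * η))) := by
    rw [growthConst, ← Real.exp_nat_mul]
    congr 1
    field_simp
    push_cast
    ring
  rw [mul_comm, hsq]
  refine ge_of_tendsto ((tendsto_weightedEnergy_atBot hη hd0 hw0).mul_const _) ?_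
  filter_upwards [eventually_le_atBot t] with s hs
  exact weightedEnergy_le_mul_exp hA hη hC hs hd hw he

lemma abs_le_of_weightedEnergy_le {η t K S : ℝ} {d w : ι → ℝ → ℝ} (hK : 0 ≤ K)
    (hQ : weightedEnergy η d w t ≤ K ^ 2 * S) (i : ι) :
    |d i t| ≤ K * √S * (1 + Real.exp (2 * (η * t))) ∧ |w i t| ≤ K * √S * Real.exp (η * t) := by
  have key : ∀ {x φ : ℝ}, 0 < φ → (x / φ) ^ 2 ≤ K ^ 2 * S → |x| ≤ K * √S * φ := by
    intro x φ hφ hx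
    have := Real.abs_le_sqrt hx
    rwa [Real.sqrt_mul (sq_nonneg K), Real.sqrt_sq hK, abs_div, abs_of_pos hφ,
      div_le_iff₀ hφ] at this
  have hd := Finset.single_le_sum (fun i _ ↦ sq_nonneg (d i t / (1 + Real.exp (2 * (η * t)))))
    (Finset.mem_univ i)
  have hw := Finset.single_le_sum (fun i _ ↦ sq_nonneg (w i t / Real.exp (η * t)))
    (Finset.mem_univ i)
  rw [weightedEnergy] at hQ
  refine ⟨key (by positivity) (le_trans ?_ hQ), key (Real.exp_pos _) (le_trans ?_ hQ)⟩
  · exact hd.trans (le_add_of_nonneg_right (Finset.sum_nonneg fun _ _ ↦ sq_nonneg _))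
  · exact hw.trans (le_add_of_nonneg_left (Finset.sum_nonneg fun _ _ ↦ sq_nonneg _))

end Gronwall

section Comparison

variable {ι : Type*} [Fintype ι] {A : Matrix ι ι ℝ} {b c c' : ι → ℝ} {u V u' V' : ι → ℝ → ℝ}
  {σ σ' : ι → ℝ} {C η t : ℝ}

/-- The amplitude of the difference of two solutions starting from `c` and `c'`, whose densities
are at most `C * e^{-4η|t|}`. -/
noncomputable def perturbationBound (A : Matrix ι ι ℝ) (C η : ℝ) (c c' : ι → ℝ) : ℝ :=
  growthConst A C η * √(∑ i, (c' i - c i) ^ 2)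

lemma perturbationBound_nonneg : 0 ≤ perturbationBound A C η c c' :=
  mul_nonneg (growthConst_pos A C η).le (Real.sqrt_nonneg _)

lemma perturbationBound_add_smul (A : Matrix ι ι ℝ) (C η : ℝ) (c α : ι → ℝ) (ε : ℝ) :
    perturbationBound A C η c (c + ε • α) = |ε| * perturbationBound A C η 0 α := by
  have hsum : ∑ i, ((c + ε • α) i - c i) ^ 2 = ε ^ 2 * ∑ i, (α i - (0 : ι → ℝ) i) ^ 2 := by
    simp [Finset.mul_sum, mul_pow]
  rw [perturbationBound, hsum, Real.sqrt_mul (sq_nonneg ε), Real.sqrt_sq_eq_abs,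
    perturbationBound, mul_left_comm]

omit [Fintype ι] in
lemma abs_density_sub_le_mul (hE : DecaysOn (density b u) C η (Iic t))
    (hE' : DecaysOn (density b u') C η (Iic t)) (i : ι) {r : ℝ} (hr : r ≤ t) :
    |density b u' i r - density b u i r| ≤ C * Real.exp (-(4 * η * |r|)) * |u' i r - u i r| := by
  simpa [density] using abs_exp_sub_exp_le (hE i r hr) (hE' i r hr)

namespace IsLogSolution

lemma V_le_exp (h : IsLogSolution A b c u V σ) (hη : 0 < η)
    (hE : DecaysOn (density b u) C η (Iic t)) (i : ι) :
    V i t ≤ C / (4 * η) * Real.exp (4 * η * t) := by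
  have hC := (hE.const_pos i self_mem_Iic).le
  have hbound : ∀ r ≤ t, ‖density b u i r‖ ≤ C / (4 * η) * (4 * η * Real.exp (4 * η * r)) :=
    fun r hr ↦ by
      rw [Real.norm_of_nonneg (density_pos b u i r).le, ← mul_assoc,
        div_mul_cancel₀ _ (by positivity)]
      refine (hE i r hr).trans (mul_le_mul_of_nonneg_left (Real.exp_le_exp.2 ?_) hC)
      nlinarith [neg_abs_le r]
  have hlim := (tendsto_exp_const_mul_atBot (show 0 < 4 * η by positivity)).const_mul (C / (4 * η))
  simpa [abs_of_nonneg (h.V_nonneg i t)] using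
    norm_sub_le_of_norm_deriv_le_of_tendsto_atBot (fun r _ ↦ h.hasDerivAt_V i r)
      (fun r _ ↦ (hasDerivAt_exp_const_mul (4 * η) r).const_mul (C / (4 * η))) hbound
      (h.tendsto_V_atBot i) (by simpa using hlim)

lemma tendsto_V_div_exp_atBot (h : IsLogSolution A b c u V σ) (hη : 0 < η)
    (hE : DecaysOn (density b u) C η (Iic t)) (i : ι) :
    Tendsto (fun r ↦ V i r / Real.exp (η * r)) atBot (𝓝 0) := by
  have hlim := (tendsto_exp_const_mul_atBot (show 0 < 3 * η by positivity)).const_mul (C / (4 * η))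
  rw [mul_zero] at hlim
  refine squeeze_zero' (.of_forall fun r ↦ div_nonneg (h.V_nonneg i r) (Real.exp_nonneg _)) ?_ hlim
  filter_upwards [eventually_le_atBot t] with r hr
  rw [div_le_iff₀ (Real.exp_pos _), mul_assoc, ← Real.exp_add]
  exact (h.V_le_exp hη (hE.mono (Iic_subset_Iic.2 hr)) i).trans_eq (by congr 2; ring)

lemma abs_logSlope_le (h : IsLogSolution A b c u V σ) (hA : ∀ i j, 0 ≤ A i j) (i : ι) (t : ℝ) :
    |logSlope A b V i t| ≤ |b i| + ∑ j, A i j * σ j := by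
  refine (abs_sub _ _).trans (add_le_add_right ?_ _)
  rw [abs_of_nonneg (Finset.sum_nonneg fun j _ ↦ mul_nonneg (hA i j) (h.V_nonneg j t))]
  exact Finset.sum_le_sum fun j _ ↦ mul_le_mul_of_nonneg_left (h.V_le j t) (hA i j)

section Pair

variable (h : IsLogSolution A b c u V σ) (h' : IsLogSolution A b c' u' V' σ')
include h h'

lemma hasDerivAt_u_sub (i : ι) (t : ℝ) :
    HasDerivAt (fun s ↦ u' i s - u i s) (-∑ j, A i j * (V' j t - V j t)) t :=
  ((h'.hasDerivAt_u i t).sub (h.hasDerivAt_u i t)).congr_deriv (by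
    simp only [mul_sub, Finset.sum_sub_distrib]; ring)

lemma hasDerivAt_V_sub (i : ι) (t : ℝ) :
    HasDerivAt (fun s ↦ V' i s - V i s) (density b u' i t - density b u i t) t :=
  (h'.hasDerivAt_V i t).sub (h.hasDerivAt_V i t)

variable (hA : ∀ i j, 0 ≤ A i j) (hη : 0 < η)
include hA hη

section Iic

variable (hE : DecaysOn (density b u) C η (Iic t)) (hE' : DecaysOn (density b u') C η (Iic t))
include hE hE'

lemma abs_sub_le (i : ι) :
    |u' i t - u i t| ≤ perturbationBound A C η c c' * (1 + Real.exp (2 * (η * t))) ∧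
      |V' i t - V i t| ≤ perturbationBound A C η c c' * Real.exp (η * t) :=
  abs_le_of_weightedEnergy_le (growthConst_pos A C η).le
    (weightedEnergy_le hA hη (hE.const_pos i self_mem_Iic).le (h.hasDerivAt_u_sub h')
      (h.hasDerivAt_V_sub h') (fun i _ hr ↦ abs_density_sub_le_mul hE hE' i hr)
      (fun i ↦ (h'.tendsto_u_atBot i).sub (h.tendsto_u_atBot i)) fun i ↦ by
        simpa only [sub_div, sub_zero] using
          (h'.tendsto_V_div_exp_atBot hη hE' i).sub (h.tendsto_V_div_exp_atBot hη hE i)) i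

lemma abs_u_sub_sub_le (i : ι) :
    |u' i t - u i t - (c' i - c i)| ≤
      (∑ j, A i j) * perturbationBound A C η c c' / η * Real.exp (η * t) := by
  have hbound : ∀ r ≤ t, ‖-∑ j, A i j * (V' j r - V j r)‖ ≤
      (∑ j, A i j) * perturbationBound A C η c c' / η * (η * Real.exp (η * r)) := fun r hr ↦ by
    rw [← mul_assoc, div_mul_cancel₀ _ hη.ne', norm_neg, mul_assoc]
    exact abs_sum_mul_le hA (fun j ↦ (h.abs_sub_le h' hA hη (hE.mono (Iic_subset_Iic.2 hr))
      (hE'.mono (Iic_subset_Iic.2 hr)) j).2) i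
  have hlim := (tendsto_exp_const_mul_atBot hη).const_mul
    ((∑ j, A i j) * perturbationBound A C η c c' / η)
  exact norm_sub_le_of_norm_deriv_le_of_tendsto_atBot (fun r _ ↦ h.hasDerivAt_u_sub h' i r)
    (fun r _ ↦ (hasDerivAt_exp_const_mul η r).const_mul _) hbound
    ((h'.tendsto_u_atBot i).sub (h.tendsto_u_atBot i)) (by simpa using hlim)

lemma abs_density_sub_le (i : ι) :
    |density b u' i t - density b u i t| ≤
      2 * C * perturbationBound A C η c c' * Real.exp (-(2 * η * |t|)) := by
  have hC := (hE.const_pos i self_mem_Iic).le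
  have hexp : 1 + Real.exp (2 * (η * t)) ≤ 2 * Real.exp (2 * η * |t|) := by
    have habs : 0 ≤ η * |t| := by positivity
    have ht : η * t ≤ η * |t| := mul_le_mul_of_nonneg_left (le_abs_self t) hη.le
    have hone : 1 ≤ Real.exp (2 * η * |t|) := Real.one_le_exp (by linarith)
    have hle : Real.exp (2 * (η * t)) ≤ Real.exp (2 * η * |t|) := Real.exp_le_exp.2 (by linarith)
    linarith
  calc |density b u' i t - density b u i t|
      ≤ C * Real.exp (-(4 * η * |t|)) * |u' i t - u i t| :=
        abs_density_sub_le_mul hE hE' i le_rfl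
    _ ≤ C * Real.exp (-(4 * η * |t|)) *
          (perturbationBound A C η c c' * (2 * Real.exp (2 * η * |t|))) :=
        mul_le_mul_of_nonneg_left ((h.abs_sub_le h' hA hη hE hE' i).1.trans
          (mul_le_mul_of_nonneg_left hexp perturbationBound_nonneg)) (by positivity)
    _ = 2 * C * perturbationBound A C η c c' *
          (Real.exp (-(4 * η * |t|)) * Real.exp (2 * η * |t|)) := by ring
    _ = _ := by rw [← Real.exp_add]; congr 2; ring

lemma abs_density_sub_le_const (i : ι) :
    |density b u' i t - density b u i t| ≤ 2 * C * perturbationBound A C η c c' := by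
  have hC := (hE.const_pos i self_mem_Iic).le
  exact (h.abs_density_sub_le h' hA hη hE hE' i).trans
    (mul_le_of_le_one_right (mul_nonneg (by positivity) perturbationBound_nonneg)
      (Real.exp_le_one_iff.2 (neg_nonpos.2 (by positivity))))

lemma abs_density_mul_logSlope_sub_le (i : ι) :
    |density b u' i t * logSlope A b V' i t - density b u i t * logSlope A b V i t| ≤
      C * (2 * (|b i| + ∑ j, A i j * σ j) + ∑ j, A i j) * perturbationBound A C η c c' := by
  have hC := hE.const_pos i self_mem_Iic
  have hK := perturbationBound_nonneg (A := A) (C := C) (η := η) (c := c) (c' := c')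
  have hslope : |logSlope A b V' i t - logSlope A b V i t| ≤
      (∑ j, A i j) * (perturbationBound A C η c c' * Real.exp (η * t)) := by
    rw [logSlope, logSlope, sub_sub_sub_cancel_left, abs_sub_comm, ← Finset.sum_sub_distrib]
    simpa only [mul_sub] using
      abs_sum_mul_le hA (fun j ↦ (h.abs_sub_le h' hA hη hE hE' j).2) i
  have hexp : Real.exp (-(4 * η * |t|)) * Real.exp (η * t) ≤ 1 := by
    rw [← Real.exp_add, Real.exp_le_one_iff]
    nlinarith [le_abs_self t, abs_nonneg t]
  have hsum : 0 ≤ ∑ j, A i j := Finset.sum_nonneg fun j _ ↦ hA i j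
  calc |density b u' i t * logSlope A b V' i t - density b u i t * logSlope A b V i t|
      = |(density b u' i t - density b u i t) * logSlope A b V i t +
          density b u' i t * (logSlope A b V' i t - logSlope A b V i t)| := by congr 1; ring
    _ ≤ |density b u' i t - density b u i t| * |logSlope A b V i t| +
          density b u' i t * |logSlope A b V' i t - logSlope A b V i t| := by
        refine (abs_add_le _ _).trans_eq ?_
        rw [abs_mul, abs_mul, abs_of_pos (density_pos b u' i t)]
    _ ≤ 2 * C * perturbationBound A C η c c' * (|b i| + ∑ j, A i j * σ j) +
          C * Real.exp (-(4 * η * |t|)) *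
            ((∑ j, A i j) * (perturbationBound A C η c c' * Real.exp (η * t))) := by
        gcongr
        exacts [h.abs_density_sub_le_const h' hA hη hE hE' i, h.abs_logSlope_le hA i t,
          hE' i t self_mem_Iic]
    _ = 2 * C * perturbationBound A C η c c' * (|b i| + ∑ j, A i j * σ j) +
          C * (∑ j, A i j) * perturbationBound A C η c c' *
            (Real.exp (-(4 * η * |t|)) * Real.exp (η * t)) := by ring
    _ ≤ 2 * C * perturbationBound A C η c c' * (|b i| + ∑ j, A i j * σ j) +
          C * (∑ j, A i j) * perturbationBound A C η c c' * 1 := by gcongr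
    _ = _ := by ring

end Iic

lemma abs_V_sub_sub_le (hE : DecaysOn (density b u) C η univ)
    (hE' : DecaysOn (density b u') C η univ) (i : ι) (ht : 0 ≤ t) :
    |V' i t - V i t - (σ' i - σ i)| ≤
      C * perturbationBound A C η c c' / η * Real.exp (-(2 * η * t)) := by
  have hbound : ∀ r, t ≤ r → ‖density b u' i r - density b u i r‖ ≤
      -(C * perturbationBound A C η c c' / η * (-(2 * η) * Real.exp (-(2 * η) * r))) :=
    fun r hr ↦ by
      have := h.abs_density_sub_le h' hA hη (hE.mono (subset_univ (Iic r)))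
        (hE'.mono (subset_univ _)) i
      rw [abs_of_nonneg (ht.trans hr)] at this
      refine this.trans_eq ?_
      field_simp
  have hlim := (tendsto_exp_neg_const_mul_atTop (show 0 < 2 * η by positivity)).const_mul
    (C * perturbationBound A C η c c' / η)
  simpa only [Real.norm_eq_abs, neg_mul] using
    norm_sub_le_of_norm_deriv_le_of_tendsto_atTop (fun r _ ↦ h.hasDerivAt_V_sub h' i r)
      (fun r _ ↦ (hasDerivAt_exp_const_mul (-(2 * η)) r).const_mul _) hbound
      ((h'.tendsto_V_atTop i).sub (h.tendsto_V_atTop i)) (by simpa using hlim)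

end Pair

end IsLogSolution

end Comparison

section Limits

lemma abs_sub_sub_mul_le {f f' f'' : ℝ → ℝ} {L : ℝ} (hf : ∀ t, HasDerivAt f (f' t) t)
    (hf' : ∀ t, HasDerivAt f' (f'' t) t) (hL : ∀ t, |f'' t| ≤ L) (s t : ℝ) :
    |f s - f t - f' t * (s - t)| ≤ L * |s - t| ^ 2 := by
  have hL0 : 0 ≤ L := (abs_nonneg _).trans (hL t)
  have hlip : ∀ r, |f' r - f' t| ≤ L * |r - t| := fun r ↦
    convex_univ.norm_image_sub_le_of_norm_hasDerivWithin_le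
      (fun x _ ↦ (hf' x).hasDerivWithinAt) (fun x _ ↦ hL x) (mem_univ t) (mem_univ r)
  have hmvt := (convex_uIcc t s).norm_image_sub_le_of_norm_hasDerivWithin_le
    (f := fun r ↦ f r - f' t * r) (C := L * |s - t|)
    (fun r _ ↦ ((hf r).sub ((hasDerivAt_id r).const_mul (f' t))).hasDerivWithinAt)
    (fun r hr ↦ by
      rw [mul_one]
      exact (hlip r).trans (mul_le_mul_of_nonneg_left (abs_sub_left_of_mem_uIcc hr) hL0))
    left_mem_uIcc right_mem_uIcc
  simp only [Real.norm_eq_abs] at hmvt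
  rw [pow_two, ← mul_assoc]
  exact (congrArg abs (by ring)).trans_le hmvt

lemma hasDerivAt_of_tendsto_of_abs_deriv_le {κ : Type*} {l : Filter κ} [l.NeBot]
    {f f' f'' : κ → ℝ → ℝ} {g g' : ℝ → ℝ} {L : ℝ}
    (hf : ∀ᶠ k in l, ∀ t, HasDerivAt (f k) (f' k t) t)
    (hf' : ∀ᶠ k in l, ∀ t, HasDerivAt (f' k) (f'' k t) t)
    (hL : ∀ᶠ k in l, ∀ t, |f'' k t| ≤ L) (hg : ∀ t, Tendsto (f · t) l (𝓝 (g t)))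
    (hg' : ∀ t, Tendsto (f' · t) l (𝓝 (g' t))) (t : ℝ) : HasDerivAt g (g' t) t := by
  have hbound : ∀ s, |g s - g t - (s - t) * g' t| ≤ L * ‖‖s - t‖ ^ 2‖ := fun s ↦ by
    rw [norm_pow, norm_norm, mul_comm (s - t)]
    refine le_of_tendsto (((hg s).sub (hg t)).sub ((hg' t).mul_const (s - t))).abs ?_
    filter_upwards [hf, hf', hL] with k hk hk' hkL
    exact abs_sub_sub_mul_le hk hk' hkL s t
  exact hasDerivAt_iff_isLittleO.2 <|
    (Asymptotics.IsBigO.of_bound L (.of_forall hbound)).trans_isLittleO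
      (Asymptotics.isLittleO_pow_sub_sub t one_lt_two)

lemma exists_tendsto_of_eventually_abs_le {κ X : Type*} {l : Ultrafilter κ} {f : κ → X → ℝ}
    {M : X → ℝ} (hf : ∀ᶠ k in (l : Filter κ), ∀ x, |f k x| ≤ M x) :
    ∃ g : X → ℝ, ∀ x, Tendsto (f · x) l (𝓝 (g x)) := by
  choose g _ hg using fun x ↦ isCompact_Icc.ultrafilter_le_nhds (l.map (f · x)) <|
    le_principal_iff.2 (hf.mono fun k hk ↦ abs_le.1 (hk x))
  exact ⟨g, hg⟩

lemma abs_inv_mul_le {ε x M : ℝ} (hε : ε ≠ 0) (hx : |x| ≤ |ε| * M) : |ε⁻¹ * x| ≤ M := by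
  rwa [abs_mul, abs_inv, inv_mul_le_iff₀ (abs_pos.2 hε)]

end Limits

section Linearization

variable {ι κ : Type*} [Fintype ι] {A : Matrix ι ι ℝ} {b c : ι → ℝ} {u V : ι → ℝ → ℝ} {σ : ι → ℝ}

lemma tendsto_perturbationBound (A : Matrix ι ι ℝ) (C η : ℝ) {l : Filter κ} {cs : κ → ι → ℝ}
    (hc : Tendsto cs l (𝓝 c)) : Tendsto (fun k ↦ perturbationBound A C η c (cs k)) l (𝓝 0) := by
  have hsum : Tendsto (fun k ↦ ∑ i, (cs k i - c i) ^ 2) l (𝓝 0) := by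
    simpa using tendsto_finsetSum Finset.univ fun i _ ↦
      ((tendsto_pi_nhds.1 hc i).sub_const (c i)).pow 2
  simpa [perturbationBound] using hsum.sqrt.const_mul (growthConst A C η)

omit [Fintype ι] in
lemma tendsto_density_quotient {l : Filter ℝ} (hl : l ≤ 𝓝[≠] 0) {us : ℝ → ι → ℝ → ℝ} {i : ι}
    {t δ : ℝ} (hδ : Tendsto (fun ε ↦ ε⁻¹ * (us ε i t - u i t)) l (𝓝 δ)) :
    Tendsto (fun ε ↦ ε⁻¹ * (density b (us ε) i t - density b u i t)) l
      (𝓝 (density b u i t * δ)) := by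
  have hzero : Tendsto (fun ε ↦ us ε i t - u i t) l (𝓝 0) := by
    have hmul := (tendsto_id.mono_left (hl.trans nhdsWithin_le_nhds)).mul hδ
    rw [zero_mul] at hmul
    refine hmul.congr' ?_
    filter_upwards [hl self_mem_nhdsWithin] with ε hε using mul_inv_cancel_left₀ hε _
  have hlim := (Real.hasDerivAt_exp (u i t + b i * t)).hasFDerivAt.hasFDerivWithinAt (s := univ)
    |>.lim hzero (.of_forall fun _ ↦ mem_univ _) hδ
  refine (hlim.congr fun ε ↦ ?_).trans_eq ?_
  · simp only [density, smul_eq_mul]; congr 3; ring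
  · simp [density, mul_comm]

namespace IsLogSolution

lemma exists_eventually_decaysOn_univ (h : IsLogSolution A b c u V σ) (hA : ∀ i j, 0 ≤ A i j)
    (hb : ∀ i, 0 < b i) {l : Filter κ} {cs : κ → ι → ℝ} {us Vs : κ → ι → ℝ → ℝ}
    {σs : κ → ι → ℝ} (hs : ∀ᶠ k in l, IsLogSolution A b (cs k) (us k) (Vs k) (σs k))
    (hc : Tendsto cs l (𝓝 c)) :
    ∃ C, ∃ η > 0, DecaysOn (density b u) C η univ ∧
      ∀ᶠ k in l, DecaysOn (density b (us k)) C η univ := by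
  -- The bound on `(-∞, T]` depends only on the initial values. It makes the solutions comparable up
  -- to `T`, which transfers the negative slope at `T`; slopes decrease, so decay persists past `T`.
  obtain ⟨η, hη, T, hT, hηb, hslope⟩ := h.exists_logSlope_lt hA hb
  set C := ∑ i, Real.exp (c i + 1 + (b i + 4 * η) * T)
  have hC : ∀ {c' : ι → ℝ}, (∀ i, c' i < c i + 1) → ∀ i, Real.exp (c' i + (b i + 4 * η) * T) ≤ C :=
    fun hc' i ↦ (Real.exp_le_exp.2 (by linarith [hc' i])).trans
      (Finset.single_le_sum (f := fun i ↦ Real.exp (c i + 1 + (b i + 4 * η) * T))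
        (fun _ _ ↦ Real.exp_nonneg _) (Finset.mem_univ i))
  have hE := h.decaysOn_univ hA hη.le hT hηb (hC fun i ↦ lt_add_one (c i)) fun i ↦ (hslope i).le
  have hcs : ∀ᶠ k in l, ∀ i, cs k i < c i + 1 := eventually_all.2 fun i ↦
    (tendsto_pi_nhds.1 hc i).eventually_lt_const (lt_add_one (c i))
  have hV : ∀ i, Tendsto (fun k ↦ Vs k i T) l (𝓝 (V i T)) := fun i ↦ by
    rw [tendsto_iff_norm_sub_tendsto_zero]
    refine squeeze_zero' (.of_forall fun k ↦ norm_nonneg _) ?_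
      (by simpa using (tendsto_perturbationBound A C η hc).mul_const (Real.exp (η * T)))
    filter_upwards [hs, hcs] with k hk hck
    exact (h.abs_sub_le hk hA hη (hE.mono (subset_univ _))
      (hk.decaysOn_Iic hA hη.le hT hηb (hC hck)) i).2
  have hslopes : ∀ᶠ k in l, ∀ i, logSlope A b (Vs k) i T < -(4 * η) := eventually_all.2 fun i ↦
    (((tendsto_finsetSum Finset.univ fun j _ ↦ (hV j).const_mul (A i j)).const_sub
      (b i))).eventually_lt_const (hslope i)
  refine ⟨C, η, hη, hE, ?_⟩
  filter_upwards [hs, hcs, hslopes] with k hk hck hsk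
  exact hk.decaysOn_univ hA hη.le hT hηb (hC hck) fun i ↦ (hsk i).le

section DifferenceQuotient

variable (h : IsLogSolution A b c u V σ) (hA : ∀ i j, 0 ≤ A i j) {C η : ℝ} (hη : 0 < η)
  (hE : DecaysOn (density b u) C η univ)
  {l : Filter ℝ} (hl : l ≤ 𝓝[≠] 0) {α : ι → ℝ} {us Vs : ℝ → ι → ℝ → ℝ} {σs : ℝ → ι → ℝ}
  (hs : ∀ᶠ ε in l, IsLogSolution A b (c + ε • α) (us ε) (Vs ε) (σs ε))
  (hEs : ∀ᶠ ε in l, DecaysOn (density b (us ε)) C η univ)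
include h hA hη hE hl hs hEs

lemma eventually_abs_quotient_le : ∀ᶠ ε in l, ∀ i t,
    |ε⁻¹ * (us ε i t - u i t)| ≤ perturbationBound A C η 0 α * (1 + Real.exp (2 * (η * t))) ∧
      |ε⁻¹ * (Vs ε i t - V i t)| ≤ perturbationBound A C η 0 α * Real.exp (η * t) := by
  filter_upwards [hl self_mem_nhdsWithin, hs, hEs] with ε hε hsol hdec i t
  have hle := h.abs_sub_le hsol hA hη (hE.mono (subset_univ (Iic t))) (hdec.mono (subset_univ _)) i
  simp only [perturbationBound_add_smul, mul_assoc] at hle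
  exact ⟨abs_inv_mul_le hε hle.1, abs_inv_mul_le hε hle.2⟩

variable [l.NeBot] {d w : ι → ℝ → ℝ} {σ' : ι → ℝ}

lemma tendsto_w_atBot_of_quotient
    (hw : ∀ i t, Tendsto (fun ε ↦ ε⁻¹ * (Vs ε i t - V i t)) l (𝓝 (w i t))) (i : ι) :
    Tendsto (w i) atBot (𝓝 0) := by
  have hbound : ∀ t, ‖w i t‖ ≤ perturbationBound A C η 0 α * Real.exp (η * t) := fun t ↦ by
    refine le_of_tendsto (hw i t).norm ?_
    filter_upwards [h.eventually_abs_quotient_le hA hη hE hl hs hEs] with ε hε using (hε i t).2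
  exact squeeze_zero_norm hbound
    (by simpa using (tendsto_exp_const_mul_atBot hη).const_mul (perturbationBound A C η 0 α))

lemma tendsto_d_atBot_of_quotient
    (hd : ∀ i t, Tendsto (fun ε ↦ ε⁻¹ * (us ε i t - u i t)) l (𝓝 (d i t))) (i : ι) :
    Tendsto (d i) atBot (𝓝 (α i)) := by
  have hbound : ∀ t, ‖d i t - α i‖ ≤
      (∑ j, A i j) * perturbationBound A C η 0 α / η * Real.exp (η * t) := fun t ↦ by
    refine le_of_tendsto ((hd i t).sub_const (α i)).norm ?_
    filter_upwards [hl self_mem_nhdsWithin, hs, hEs] with ε hε hsol hdec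
    have hle := h.abs_u_sub_sub_le hsol hA hη (hE.mono (subset_univ (Iic t)))
      (hdec.mono (subset_univ _)) i
    have hscale : ε⁻¹ * (us ε i t - u i t) - α i =
        ε⁻¹ * (us ε i t - u i t - ((c + ε • α) i - c i)) := by
      simp [mul_sub, inv_mul_cancel_left₀ hε]
    rw [hscale]
    refine abs_inv_mul_le hε (hle.trans_eq ?_)
    rw [perturbationBound_add_smul]
    ring
  refine tendsto_iff_norm_sub_tendsto_zero.2 (squeeze_zero (fun t ↦ norm_nonneg _) hbound ?_)
  simpa using (tendsto_exp_const_mul_atBot hη).const_mul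
    ((∑ j, A i j) * perturbationBound A C η 0 α / η)

lemma tendsto_w_atTop_of_quotient
    (hw : ∀ i t, Tendsto (fun ε ↦ ε⁻¹ * (Vs ε i t - V i t)) l (𝓝 (w i t)))
    (hσ : ∀ i, Tendsto (fun ε ↦ ε⁻¹ * (σs ε i - σ i)) l (𝓝 (σ' i))) (i : ι) :
    Tendsto (w i) atTop (𝓝 (σ' i)) := by
  have hbound : ∀ t, 0 ≤ t → ‖w i t - σ' i‖ ≤
      C * perturbationBound A C η 0 α / η * Real.exp (-(2 * η * t)) := fun t ht ↦ by
    refine le_of_tendsto ((hw i t).sub (hσ i)).norm ?_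
    filter_upwards [hl self_mem_nhdsWithin, hs, hEs] with ε hε hsol hdec
    rw [← mul_sub]
    refine abs_inv_mul_le hε ((h.abs_V_sub_sub_le hsol hA hη hE hdec i ht).trans_eq ?_)
    rw [perturbationBound_add_smul]
    ring
  refine tendsto_iff_norm_sub_tendsto_zero.2 (squeeze_zero' (.of_forall fun t ↦ norm_nonneg _)
    ((eventually_ge_atTop 0).mono hbound) ?_)
  simpa using (tendsto_exp_neg_const_mul_atTop (show 0 < 2 * η by positivity)).const_mul
    (C * perturbationBound A C η 0 α / η)

lemma hasDerivAt_d_of_quotient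
    (hd : ∀ i t, Tendsto (fun ε ↦ ε⁻¹ * (us ε i t - u i t)) l (𝓝 (d i t)))
    (hw : ∀ i t, Tendsto (fun ε ↦ ε⁻¹ * (Vs ε i t - V i t)) l (𝓝 (w i t))) (i : ι) (t : ℝ) :
    HasDerivAt (d i) (-∑ j, A i j * w j t) t := by
  refine hasDerivAt_of_tendsto_of_abs_deriv_le (l := l) (g' := fun t ↦ -∑ j, A i j * w j t)
    (f' := fun ε t ↦ -∑ j, A i j * (ε⁻¹ * (Vs ε j t - V j t)))
    (f'' := fun ε t ↦ -∑ j, A i j * (ε⁻¹ * (density b (us ε) j t - density b u j t)))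
    (L := (∑ j, A i j) * (2 * C * perturbationBound A C η 0 α))
    (hs.mono fun ε hsol t ↦ ?_) (hs.mono fun ε hsol t ↦ ?_) ?_ (hd i)
    (fun t ↦ (tendsto_finsetSum Finset.univ fun j _ ↦ (hw j t).const_mul (A i j)).neg) t
  · refine ((h.hasDerivAt_u_sub hsol i t).const_mul ε⁻¹).congr_deriv ?_
    rw [mul_neg, Finset.mul_sum]
    simp only [mul_left_comm]
  · exact (HasDerivAt.fun_sum fun j _ ↦
      ((h.hasDerivAt_V_sub hsol j t).const_mul ε⁻¹).const_mul (A i j)).neg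
  · filter_upwards [hl self_mem_nhdsWithin, hs, hEs] with ε hε hsol hdec t
    rw [abs_neg]
    refine abs_sum_mul_le hA (fun j ↦ abs_inv_mul_le hε ?_) i
    have hle := h.abs_density_sub_le_const hsol hA hη (hE.mono (subset_univ (Iic t)))
      (hdec.mono (subset_univ _)) j
    rwa [perturbationBound_add_smul, mul_left_comm] at hle

lemma hasDerivAt_w_of_quotient
    (hd : ∀ i t, Tendsto (fun ε ↦ ε⁻¹ * (us ε i t - u i t)) l (𝓝 (d i t)))
    (hw : ∀ i t, Tendsto (fun ε ↦ ε⁻¹ * (Vs ε i t - V i t)) l (𝓝 (w i t))) (i : ι) (t : ℝ) :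
    HasDerivAt (w i) (density b u i t * d i t) t := by
  refine hasDerivAt_of_tendsto_of_abs_deriv_le (l := l) (g' := fun t ↦ density b u i t * d i t)
    (f' := fun ε t ↦ ε⁻¹ * (density b (us ε) i t - density b u i t))
    (f'' := fun ε t ↦ ε⁻¹ * (density b (us ε) i t * logSlope A b (Vs ε) i t -
      density b u i t * logSlope A b V i t))
    (L := C * (2 * (|b i| + ∑ j, A i j * σ j) + ∑ j, A i j) * perturbationBound A C η 0 α)
    (hs.mono fun ε hsol t ↦ (h.hasDerivAt_V_sub hsol i t).const_mul ε⁻¹)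
    (hs.mono fun ε hsol t ↦
      ((hsol.hasDerivAt_density i t).sub (h.hasDerivAt_density i t)).const_mul ε⁻¹)
    ?_ (hw i) (fun t ↦ tendsto_density_quotient hl (hd i t)) t
  filter_upwards [hl self_mem_nhdsWithin, hs, hEs] with ε hε hsol hdec t
  refine abs_inv_mul_le hε ((h.abs_density_mul_logSlope_sub_le hsol hA hη
    (hE.mono (subset_univ (Iic t))) (hdec.mono (subset_univ _)) i).trans_eq ?_)
  rw [perturbationBound_add_smul]
  ring

end DifferenceQuotient

theorem exists_isLinearizedSolution (h : IsLogSolution A b c u V σ) (hA : ∀ i j, 0 ≤ A i j)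
    (hb : ∀ i, 0 < b i) {α σ' : ι → ℝ} {us Vs : ℝ → ι → ℝ → ℝ} {σs : ℝ → ι → ℝ}
    (hs : ∀ᶠ ε in 𝓝[≠] 0, IsLogSolution A b (c + ε • α) (us ε) (Vs ε) (σs ε))
    (hσ : ∀ i, Tendsto (fun ε ↦ ε⁻¹ * (σs ε i - σ i)) (𝓝[≠] 0) (𝓝 (σ' i))) :
    ∃ d w, IsLinearizedSolution A (density b u) α σ' d w := by
  have hc : Tendsto (fun ε : ℝ ↦ c + ε • α) (𝓝[≠] 0) (𝓝 c) :=
    ((Continuous.tendsto' (by fun_prop) _ _ (by simp)).mono_left nhdsWithin_le_nhds)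
  obtain ⟨C, η, hη, hE, hEs⟩ := h.exists_eventually_decaysOn_univ hA hb hs hc
  set l := Ultrafilter.of (𝓝[≠] (0 : ℝ))
  have hl : (l : Filter ℝ) ≤ 𝓝[≠] 0 := Ultrafilter.of_le _
  have hbound := h.eventually_abs_quotient_le hA hη hE hl (hl hs) (hl hEs)
  obtain ⟨d, hd⟩ := exists_tendsto_of_eventually_abs_le (f := fun ε (p : ι × ℝ) ↦ _)
    (hbound.mono fun ε hε p ↦ (hε p.1 p.2).1)
  obtain ⟨w, hw⟩ := exists_tendsto_of_eventually_abs_le (f := fun ε (p : ι × ℝ) ↦ _)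
    (hbound.mono fun ε hε p ↦ (hε p.1 p.2).2)
  have hd' : ∀ i t, Tendsto (fun ε ↦ ε⁻¹ * (us ε i t - u i t)) l (𝓝 (d (i, t))) :=
    fun i t ↦ hd (i, t)
  have hw' : ∀ i t, Tendsto (fun ε ↦ ε⁻¹ * (Vs ε i t - V i t)) l (𝓝 (w (i, t))) :=
    fun i t ↦ hw (i, t)
  exact ⟨fun i t ↦ d (i, t), fun i t ↦ w (i, t),
    { hasDerivAt_d := h.hasDerivAt_d_of_quotient hA hη hE hl (hl hs) (hl hEs) hd' hw'
      hasDerivAt_w := h.hasDerivAt_w_of_quotient hA hη hE hl (hl hs) (hl hEs) hd' hw'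
      tendsto_d_atBot := h.tendsto_d_atBot_of_quotient hA hη hE hl (hl hs) (hl hEs) hd'
      tendsto_w_atBot := h.tendsto_w_atBot_of_quotient hA hη hE hl (hl hs) (hl hEs) hw'
      tendsto_w_atTop := h.tendsto_w_atTop_of_quotient hA hη hE hl (hl hs) (hl hEs) hw'
        fun i ↦ (hσ i).mono_left hl }⟩

end IsLogSolution

end Linearization

lemma exists_ne_zero_forall_fderiv_apply_eq_zero {ι : Type*} [Fintype ι] [DecidableEq ι]
    {f : ι → (ι → ℝ) → ℝ} {x : ι → ℝ}
    (hdet : (Matrix.of fun i j ↦ fderiv ℝ (f i) x (Pi.single j 1)).det = 0) :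
    ∃ v ≠ 0, ∀ i, fderiv ℝ (f i) x v = 0 := by
  obtain ⟨v, hv, hker⟩ := Matrix.exists_mulVec_eq_zero_iff.2 hdet
  refine ⟨v, hv, fun i ↦ ?_⟩
  rw [pi_eq_sum_univ' v]
  simpa [Matrix.mulVec, dotProduct, mul_comm] using congrFun hker i

lemma snoc_zero_add_smul {n : ℕ} (c α : Fin n → ℝ) (ε : ℝ) :
    (Fin.snoc (c + ε • α) 0 : Fin (n + 1) → ℝ) = Fin.snoc c 0 + ε • Fin.snoc α 0 := by
  funext i
  cases i using Fin.lastCases <;> simp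

lemma RadialSolution.isLogSolution_snoc {n : ℕ} {A : Matrix (Fin (n + 1)) (Fin (n + 1)) ℝ}
    {β : Fin (n + 1) → ℝ} {U : Fin (n + 1) → ℝ → ℝ} (hU : RadialSolution A β U)
    (hA : ∀ i j, 0 ≤ A i j) (hcont : ∀ i, ContinuousWithinAt (U i) (Ici 0) 0) {c : Fin n → ℝ}
    (hinit : ∀ j : Fin n, U j.castSucc 0 = c j) (hlast : U (Fin.last n) 0 = 0) :
    IsLogSolution A (fun i ↦ β i + 2) (Fin.snoc c 0) (fun i t ↦ U i (Real.exp t))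
      (partialEnergy β U) (energy β U) := by
  have hsnoc : (fun i ↦ U i 0) = Fin.snoc (α := fun _ ↦ ℝ) c 0 := by
    funext i
    cases i using Fin.lastCases <;> simp [hinit, hlast]
  exact hsnoc ▸ hU.isLogSolution hA hcont

theorem jacobian_of_energy_map_nonsingular_general {n : ℕ}
    (A : Matrix (Fin (n + 1)) (Fin (n + 1)) ℝ) (β : Fin (n + 1) → ℝ) (hsymm : A.IsSymm)
    (hnonneg : ∀ i j, 0 ≤ A i j)
    (hirr : ∀ S : Finset (Fin (n + 1)), S.Nonempty → S ≠ Finset.univ →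
      ∃ i ∈ S, ∃ j ∈ Sᶜ, A i j ≠ 0)
    (hβ : ∀ i, -2 < β i) (c₀ : Fin n → ℝ) (V : Set (Fin n → ℝ)) (hV : V ∈ 𝓝 c₀)
    (U : (Fin n → ℝ) → Fin (n + 1) → ℝ → ℝ)
    (hUsol : ∀ c ∈ V, RadialSolution A β (U c))
    (hUcont0 : ∀ c ∈ V, ∀ i, ContinuousWithinAt (U c i) (Set.Ici 0) 0)
    (hUinit : ∀ c ∈ V, ∀ j : Fin n, U c j.castSucc 0 = c j)
    (hUlast : ∀ c ∈ V, U c (Fin.last n) 0 = 0)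
    (σ : (Fin n → ℝ) → Fin (n + 1) → ℝ)
    (hσ : ∀ c ∈ V, ∀ i, σ c i = energy β (U c) i)
    (hdiff : ∀ i, DifferentiableAt ℝ (fun c ↦ σ c i) c₀) :
    (Matrix.of fun i j : Fin n ↦
        fderiv ℝ (fun c ↦ σ c i.castSucc) c₀ (Pi.single j 1)).det ≠ 0 := by
  intro hdet
  obtain ⟨α, hα, hker⟩ := exists_ne_zero_forall_fderiv_apply_eq_zero hdet
  have hb : ∀ i, 0 < β i + 2 := fun i ↦ by linarith [hβ i]
  have hsol : ∀ c ∈ V, IsLogSolution A (fun i ↦ β i + 2) (Fin.snoc c 0)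
      (fun i t ↦ U c i (Real.exp t)) (partialEnergy β (U c)) (σ c) := fun c hc ↦ by
    rw [funext (hσ c hc)]
    exact (hUsol c hc).isLogSolution_snoc hnonneg (hUcont0 c hc) (hUinit c hc) (hUlast c hc)
  have hline : ∀ᶠ ε : ℝ in 𝓝[≠] 0, c₀ + ε • α ∈ V :=
    ((Continuous.tendsto' (by fun_prop) 0 c₀ (by simp)).mono_left nhdsWithin_le_nhds) hV
  obtain ⟨d, w, hlin⟩ := (hsol c₀ (mem_of_mem_nhds hV)).exists_isLinearizedSolution hnonneg hb
    (hline.mono fun ε hε ↦ snoc_zero_add_smul c₀ α ε ▸ hsol _ hε)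
    fun i ↦ ((hdiff i).hasFDerivAt.hasLineDerivAt α).tendsto_slope_zero
  have hτ : ∀ i ≠ Fin.last n, fderiv ℝ (fun c ↦ σ c i) c₀ α = 0 := fun i hi ↦ by
    obtain ⟨j, rfl⟩ := Fin.exists_castSucc_eq.2 hi
    exact hker j
  have hzero := (hsol c₀ (mem_of_mem_nhds hV)).initial_perturbation_eq_zero hnonneg hsymm hirr hb
    hlin hτ (Fin.snoc_last _ _)
  exact hα (funext fun j ↦ by simpa using congrFun hzero j.castSucc)

theorem jacobian_of_energy_map_nonsingular {n : ℕ}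
    (A : Matrix (Fin (n + 1)) (Fin (n + 1)) ℝ) (β : Fin (n + 1) → ℝ)
    (hA : H1 A) (hβ : ∀ i, -2 < β i)
    -- c₀ is a point of Π₁, V a neighborhood of c₀ on which a differentiable
    -- family of finite-energy radial solutions is given
    (c₀ : Fin n → ℝ) (V : Set (Fin n → ℝ)) (hV : IsOpen V) (hc₀V : c₀ ∈ V)
    (U : (Fin n → ℝ) → Fin (n + 1) → ℝ → ℝ)
    (hUsol : ∀ c ∈ V, RadialSolution A β (U c))
    (hUcont0 : ∀ c ∈ V, ∀ i, ContinuousWithinAt (U c i) (Set.Ici 0) 0)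
    (hUinit : ∀ c ∈ V, ∀ j : Fin n, U c j.castSucc 0 = c j)
    (hUlast : ∀ c ∈ V, U c (Fin.last n) 0 = 0)
    (σ : (Fin n → ℝ) → Fin (n + 1) → ℝ)
    (hσ : ∀ c ∈ V, ∀ i, σ c i = energy β (U c) i)
    (hdiff : ∀ i, DifferentiableAt ℝ (fun c => σ c i) c₀) :
    (Matrix.of fun i j : Fin n =>
        fderiv ℝ (fun c => σ c i.castSucc) c₀ (Pi.single j 1)).det ≠ 0 :=
  jacobian_of_energy_map_nonsingular_general A β hA.1 hA.2.1 hA.2.2.1 hβ c₀ V (hV.mem_nhds hc₀V)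
    U hUsol hUcont0 hUinit hUlast σ hσ hdiff
end
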